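/- arXiv:2603.12954 — 4 statements merged into one kernel-verified Lean document; each statement's English description precedes it below -/
import Mathlib

section
/- Let X be a metric space, Ω ⊂ X open, and μ an Ahlfors s-regular measure on Ω for some s ∈ (0,∞). Let (ε_n) and (η_n) be sequences of positive reals with ε_n → 0, let W ∈ L¹_loc(Ω×Ω, μ×μ), W ≥ 0, and let ζ be a gauge satisfying the four admissibility conditions, with associated Carathéodory measure ψ. Assume Σ_{n=1}^∞ η_n ∫_Ω ε_n^{−s} ζ(B_{ε_n}(x)) [ ⨍_{B_{ε_n}(x)} χ_Ω(z) W(z,x) dμ(z) ] dμ(x) < ∞. Then the set A := { x ∈ Ω : limsup_{n→∞} η_n ⨍_{B_{ε_n/2}(x)} ⨍_{B_{ε_n/2}(x)} W(z,y) dμ(z) dμ(y) > 0 } satisfies ψ(A) = 0; in particular, for ψ-almost every x ∈ Ω, lim_{n→∞} η_n ⨍_{B_{ε_n/2}(x)} ⨍_{B_{ε_n/2}(x)} W(z,y) dμ(z) dμ(y) = 0. -/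
/-! Fix `k` and let `Sₙ` be the set of points where the `n`-th weighted double average is at least
`1 / (k + 1)`. For `x ∈ Sₙ`, comparability of the gauge and Ahlfors regularity bound `ζ (B_{εₙ}(x))`
by a constant times the integral over `B_{εₙ/2}(x)` of the integrand of the `n`-th energy, weighted
by `ηₙ`. For a maximal family of disjoint half-balls with centres in `Sₙ`, the corresponding full
balls cover `Sₙ`, so `φ_δ(Sₙ)` is at most a constant times the `n`-th term of the convergent series.
As `φ_δ` is an outer measure, Borel–Cantelli shows that the points lying in infinitely many `Sₙ`
form a null set. -/

open MeasureTheory Metric Filter Set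
open scoped ENNReal Topology

/-- The approximating measure `φ_δ` of Carathéodory's construction from the gauge `ζ`
and the family of all Borel subsets. -/
noncomputable def caraPre {X : Type*} [MetricSpace X] [MeasurableSpace X]
    (ζ : Set X → ℝ≥0∞) (δ : ℝ) (A : Set X) : ℝ≥0∞ :=
  ⨅ (G : Set (Set X)) (_ : G.Countable) (_ : ∀ S ∈ G, MeasurableSet S)
    (_ : ∀ S ∈ G, EMetric.diam S ≤ ENNReal.ofReal δ) (_ : A ⊆ ⋃₀ G),
    ∑' S : G, ζ S.1

/-- The resulting measure `ψ = sup_{δ>0} φ_δ` of Carathéodory's construction. -/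
noncomputable def caraMeas {X : Type*} [MetricSpace X] [MeasurableSpace X]
    (ζ : Set X → ℝ≥0∞) (A : Set X) : ℝ≥0∞ :=
  ⨆ (δ : ℝ) (_ : 0 < δ), caraPre ζ δ A

/-- The double average `⨍_{B_ε(x)} ⨍_{B_ε(x)} W(z,y) dμ(z) dμ(y)`. -/
noncomputable def doubleAvg {X : Type*} [MetricSpace X] [MeasurableSpace X]
    (μ : Measure X) (W : X → X → ℝ≥0∞) (x : X) (ε : ℝ) : ℝ≥0∞ :=
  (μ (closedBall x ε))⁻¹ * (μ (closedBall x ε))⁻¹ *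
    ∫⁻ z in closedBall x ε, ∫⁻ y in closedBall x ε, W z y ∂μ ∂μ

open scoped NNReal

section CaratheodoryConstruction

variable {X : Type*} [MetricSpace X] [MeasurableSpace X] {ζ : Set X → ℝ≥0∞} {δ : ℝ}

theorem caraPre_le_tsum {ι : Type*} [Countable ι] {A : Set X} (S : ι → Set X)
    (hmeas : ∀ i, MeasurableSet (S i)) (hdiam : ∀ i, ediam (S i) ≤ ENNReal.ofReal δ)
    (hcover : A ⊆ ⋃ i, S i) : caraPre ζ δ A ≤ ∑' i, ζ (S i) :=
  calc caraPre ζ δ A ≤ ∑' T : range S, ζ T :=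
        iInf₂_le_of_le (range S) (countable_range S) <|
          iInf₂_le_of_le (forall_mem_range.2 hmeas) (forall_mem_range.2 hdiam) <|
            iInf_le _ (by rwa [sUnion_range])
    _ = ∑' T : range S, ζ (S (rangeSplitting S T)) := by simp only [apply_rangeSplitting]
    _ ≤ ∑' i, ζ (S i) :=
        ENNReal.tsum_comp_le_tsum_of_injective (rangeSplitting_injective S) fun i => ζ (S i)

theorem caraPre_empty : caraPre ζ δ ∅ = 0 := by
  simpa using caraPre_le_tsum (ζ := ζ) (δ := δ) (A := ∅) (fun i : Empty => i.elim)
    (fun i => i.elim) (fun i => i.elim) (empty_subset _)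

theorem caraPre_mono {A B : Set X} (h : A ⊆ B) : caraPre ζ δ A ≤ caraPre ζ δ B :=
  iInf₂_mono fun _ _ => iInf₂_mono fun _ _ => iInf_mono' fun hB => ⟨h.trans hB, le_rfl⟩

theorem exists_cover_of_caraPre_lt {A : Set X} {a : ℝ≥0∞} (h : caraPre ζ δ A < a) :
    ∃ G : Set (Set X), G.Countable ∧ (∀ S ∈ G, MeasurableSet S) ∧
      (∀ S ∈ G, ediam S ≤ ENNReal.ofReal δ) ∧ A ⊆ ⋃₀ G ∧ ∑' S : G, ζ S < a := by
  simp only [caraPre, iInf_lt_iff, exists_prop] at h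
  exact h

theorem caraPre_iUnion_le (A : ℕ → Set X) :
    caraPre ζ δ (⋃ n, A n) ≤ ∑' n, caraPre ζ δ (A n) := by
  refine ENNReal.le_of_forall_pos_le_add fun e he hfin => ?_
  obtain ⟨e', he', hsum⟩ := ENNReal.exists_pos_sum_of_countable (ENNReal.coe_pos.2 he).ne' ℕ
  have hlt n : caraPre ζ δ (A n) < caraPre ζ δ (A n) + e' n :=
    ENNReal.lt_add_right (ENNReal.ne_top_of_tsum_ne_top hfin.ne n) (by simpa using (he' n).ne')
  choose G hcount hmeas hdiam hcover hG using fun n => exists_cover_of_caraPre_lt (hlt n)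
  have (n : ℕ) : Countable (G n) := (hcount n).to_subtype
  have hcover' : ⋃ n, A n ⊆ ⋃ p : Σ n, G n, (p.2 : Set X) := by
    simpa only [iUnion_sigma, ← sUnion_eq_iUnion] using iUnion_mono hcover
  calc caraPre ζ δ (⋃ n, A n) ≤ ∑' p : Σ n, G n, ζ p.2 :=
        caraPre_le_tsum _ (fun p => hmeas _ _ p.2.2) (fun p => hdiam _ _ p.2.2) hcover'
    _ = ∑' n, ∑' S : G n, ζ S := ENNReal.tsum_sigma' _
    _ ≤ ∑' n, (caraPre ζ δ (A n) + e' n) := ENNReal.tsum_le_tsum fun n => (hG n).le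
    _ = ∑' n, caraPre ζ δ (A n) + ∑' n, (e' n : ℝ≥0∞) := ENNReal.tsum_add
    _ ≤ ∑' n, caraPre ζ δ (A n) + e := by gcongr

/-- `φ_δ` bundled as an outer measure, which makes Borel–Cantelli available for it. -/
noncomputable def caraPreOuter (ζ : Set X → ℝ≥0∞) (δ : ℝ) : OuterMeasure X where
  measureOf := caraPre ζ δ
  empty := caraPre_empty
  mono := caraPre_mono
  iUnion_nat A _ := caraPre_iUnion_le A

theorem caraMeas_eq_zero_of_forall_caraPreOuter {A : Set X}
    (h : ∀ δ > 0, caraPreOuter ζ δ A = 0) : caraMeas ζ A = 0 :=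
  le_antisymm (iSup₂_le fun δ hδ => (h δ hδ).le) zero_le

theorem caraPreOuter_le_measure_of_forall_closedBall [OpensMeasurableSpace X] {ν : Measure X}
    {A U : Set X} {R : ℝ} (hR : 0 ≤ R) (hRδ : 2 * R ≤ δ)
    (hU : ∀ x ∈ A, closedBall x (R / 2) ⊆ U) (hζ : ∀ x ∈ A, ζ (closedBall x R) ≠ 0)
    (hle : ∀ x ∈ A, ζ (closedBall x R) ≤ ν (closedBall x (R / 2))) :
    caraPreOuter ζ δ A ≤ ν U := by
  rcases eq_or_ne (ν U) ⊤ with htop | hfin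
  · exact htop ▸ le_top
  obtain ⟨u, huA, hdisj, hmeet⟩ := Vitali.exists_disjoint_subfamily_covering_enlargement
    (fun x => closedBall x (R / 2)) A (fun _ => (1 : ℝ)) 2 one_lt_two (fun _ _ => zero_le_one) 1
    (fun _ _ => le_rfl) (fun x _ => nonempty_closedBall.2 (by positivity))
  have hdisj' : Pairwise (Function.onFun Disjoint fun x : u => closedBall (x : X) (R / 2)) :=
    fun x y hxy => hdisj x.2 y.2 (Subtype.coe_injective.ne hxy)
  have hunion : ν (⋃ x : u, closedBall (x : X) (R / 2)) ≤ ν U :=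
    measure_mono (iUnion_subset fun x => hU x (huA x.2))
  have : Countable u := by
    refine countable_univ_iff.1 ((Measure.countable_meas_pos_of_disjoint_of_meas_iUnion_ne_top ν
      (fun _ => measurableSet_closedBall) hdisj' (ne_top_of_le_ne_top hfin hunion)).mono ?_)
    exact fun x _ => (pos_iff_ne_zero.2 (hζ x (huA x.2))).trans_le (hle x (huA x.2))
  have hcover : A ⊆ ⋃ x : u, closedBall (x : X) R := fun x hx => by
    obtain ⟨y, hy, hxy, -⟩ := hmeet x hx
    have := dist_le_add_of_nonempty_closedBall_inter_closedBall hxy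
    exact mem_iUnion.2 ⟨⟨y, hy⟩, mem_closedBall.2 (by linarith)⟩
  have hdiam (x : X) : ediam (closedBall x R) ≤ ENNReal.ofReal δ :=
    ediam_le_of_forall_dist_le fun y hy z hz => by
      linarith [dist_triangle_right y z x, mem_closedBall.1 hy, mem_closedBall.1 hz]
  calc caraPre ζ δ A ≤ ∑' x : u, ζ (closedBall (x : X) R) :=
        caraPre_le_tsum _ (fun _ => measurableSet_closedBall) (fun x => hdiam x) hcover
    _ ≤ ∑' x : u, ν (closedBall (x : X) (R / 2)) :=
        ENNReal.tsum_le_tsum fun x => hle x (huA x.2)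
    _ ≤ ν (⋃ x : u, closedBall (x : X) (R / 2)) :=
        tsum_meas_le_meas_iUnion_of_disjoint ν (fun _ => measurableSet_closedBall) hdisj'
    _ ≤ ν U := hunion

end CaratheodoryConstruction

theorem eventually_nhdsGT_zero_of_forall_ofReal_lt {p : ℝ → Prop} {a : ℝ≥0∞} (ha : 0 < a)
    (h : ∀ R, 0 < R → ENNReal.ofReal R < a → p R) : ∀ᶠ R in 𝓝[>] (0 : ℝ), p R := by
  have hlim : Tendsto ENNReal.ofReal (𝓝[>] 0) (𝓝 0) := by
    simpa using (ENNReal.continuous_ofReal.tendsto 0).mono_left nhdsWithin_le_nhds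
  filter_upwards [self_mem_nhdsWithin, hlim.eventually_lt_const ha] with R hR hRa
  exact h R hR hRa

theorem measure_limsup_atTop_eq_zero_of_eventually_le {α F : Type*} [FunLike F (Set α) ℝ≥0∞]
    [OuterMeasureClass F α] {m : F} {S : ℕ → Set α} {a : ℕ → ℝ≥0∞} (ha : ∑' n, a n ≠ ⊤)
    (h : ∀ᶠ n in atTop, m (S n) ≤ a n) : m (limsup S atTop) = 0 := by
  obtain ⟨N, hN⟩ := eventually_atTop.1 h
  rw [← limsup_nat_add S N]
  refine measure_limsup_atTop_eq_zero (ne_top_of_le_ne_top ha ?_)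
  calc ∑' n, m (S (n + N)) ≤ ∑' n, a (n + N) := ENNReal.tsum_le_tsum fun n => hN _ (by omega)
    _ ≤ ∑' n, a n := ENNReal.tsum_comp_le_tsum_of_injective (add_left_injective N) a

theorem exists_nat_frequently_inv_le_of_not_tendsto_zero {α : Type*} {l : Filter α}
    {u : α → ℝ≥0∞} (h : ¬ Tendsto u l (𝓝 0)) :
    ∃ k : ℕ, ∃ᶠ i in l, (k + 1 : ℝ≥0∞)⁻¹ ≤ u i := by
  simp only [ENNReal.tendsto_nhds_zero, not_forall, not_eventually, not_le] at h
  obtain ⟨e, he, hfreq⟩ := h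
  obtain ⟨k, hk⟩ := ENNReal.exists_inv_nat_lt he.ne'
  refine ⟨k, hfreq.mono fun i hi => ?_⟩
  calc (k + 1 : ℝ≥0∞)⁻¹ ≤ (k : ℝ≥0∞)⁻¹ := ENNReal.inv_le_inv.2 le_self_add
    _ ≤ u i := (hk.trans hi).le

theorem limsup_pos_iff_not_tendsto_zero {α : Type*} {l : Filter α} {u : α → ℝ≥0∞} [l.NeBot] :
    0 < limsup u l ↔ ¬ Tendsto u l (𝓝 0) := by
  rw [pos_iff_ne_zero, not_iff_not]
  exact ⟨fun h => tendsto_of_le_liminf_of_limsup_le zero_le h.le, fun h => h.limsup_eq⟩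

section AhlforsRegularity

variable {X : Type*} [MetricSpace X] [MeasurableSpace X] {μ : Measure X} {s : ℝ} {Ω : Set X}

/-- Ahlfors `s`-regularity of `μ` on `Ω`. The balls are balls of the ambient space, and the
condition is empty when `Ω` has diameter `0`. -/
def IsAhlforsRegularOn (μ : Measure X) (s : ℝ) (Ω : Set X) : Prop :=
  ∃ c C : ℝ, 0 < c ∧ 0 < C ∧ ∀ x ∈ Ω, ∀ ρ : ℝ, 0 < ρ → ENNReal.ofReal ρ < ediam Ω →
    ENNReal.ofReal (c * ρ ^ s) ≤ μ (closedBall x ρ) ∧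
      μ (closedBall x ρ) ≤ ENNReal.ofReal (C * ρ ^ s)

/-- The inverse-measure comparison through which Ahlfors regularity enters: at small scales
`μ(B_{R/2}(x))⁻² ≤ K R⁻ˢ μ(B_R(y))⁻¹`, uniformly in `x, y ∈ Ω`. -/
def HasInvMeasureBound (μ : Measure X) (s : ℝ) (Ω : Set X) (K : ℝ≥0) : Prop :=
  ∀ᶠ R in 𝓝[>] (0 : ℝ), ∀ x ∈ Ω, ∀ y ∈ Ω,
    (μ (closedBall x (R / 2)))⁻¹ * (μ (closedBall x (R / 2)))⁻¹ ≤
      K * ((ENNReal.ofReal R ^ s)⁻¹ * (μ (closedBall y R))⁻¹)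

theorem exists_hasInvMeasureBound_of_subsingleton (hs : 0 ≤ s) (hΩ : IsOpen Ω)
    (hsub : Ω.Subsingleton) : ∃ K, HasInvMeasureBound μ s Ω K := by
  rcases hsub.eq_empty_or_singleton with rfl | ⟨x₀, rfl⟩
  · exact ⟨0, by simp [HasInvMeasureBound]⟩
  have hball : ∀ᶠ R in 𝓝[>] (0 : ℝ), closedBall x₀ R = {x₀} ∧ closedBall x₀ (R / 2) = {x₀} := by
    filter_upwards [self_mem_nhdsWithin, nhdsWithin_le_nhds
      (eventually_closedBall_subset (hΩ.mem_nhds (mem_singleton x₀)))] with R (hR : 0 < R) hsubset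
    have hle : R / 2 ≤ R := half_le_self hR.le
    constructor
    · exact hsubset.antisymm (singleton_subset_iff.2 (mem_closedBall_self hR.le))
    · exact ((closedBall_subset_closedBall hle).trans hsubset).antisymm
        (singleton_subset_iff.2 (mem_closedBall_self (by positivity)))
  have hscale : ∀ᶠ R in 𝓝[>] (0 : ℝ), 1 ≤ (ENNReal.ofReal R ^ s)⁻¹ :=
    eventually_nhdsGT_zero_of_forall_ofReal_lt one_pos fun R _ hR =>
      ENNReal.one_le_inv.2 (ENNReal.rpow_le_one hR.le hs)
  obtain ⟨K, hK⟩ : ∃ K : ℝ≥0, (μ {x₀})⁻¹ * (μ {x₀})⁻¹ ≤ K * (μ {x₀})⁻¹ := by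
    rcases eq_or_ne (μ {x₀}) 0 with h0 | h0
    · exact ⟨1, by simp [h0]⟩
    · exact ⟨(μ {x₀})⁻¹.toNNReal, by rw [ENNReal.coe_toNNReal (ENNReal.inv_ne_top.2 h0)]⟩
  refine ⟨K, ?_⟩
  filter_upwards [hball, hscale] with R ⟨hR, hR'⟩ hRs
  rintro _ rfl _ rfl
  rw [hR, hR']
  exact hK.trans (by gcongr; exact le_mul_of_one_le_left zero_le hRs)

theorem IsAhlforsRegularOn.exists_hasInvMeasureBound (hμ : IsAhlforsRegularOn μ s Ω)
    (hs : 0 ≤ s) (hΩ : IsOpen Ω) : ∃ K, HasInvMeasureBound μ s Ω K := by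
  rcases eq_or_ne (ediam Ω) 0 with hdiam | hdiam
  · exact exists_hasInvMeasureBound_of_subsingleton hs hΩ (ediam_eq_zero_iff.1 hdiam)
  obtain ⟨c, C, hc, hC, hreg⟩ := hμ
  refine ⟨(C * (2 ^ s) ^ 2 / c ^ 2).toNNReal, eventually_nhdsGT_zero_of_forall_ofReal_lt
    (pos_iff_ne_zero.2 hdiam) fun R hR hRΩ x hx y hy => ?_⟩
  have hlower := (hreg x hx (R / 2) (by positivity)
    ((ENNReal.ofReal_le_ofReal (half_le_self hR.le)).trans_lt hRΩ)).1
  have hupper := (hreg y hy R hR hRΩ).2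
  have hreal : (c * (R / 2) ^ s)⁻¹ * (c * (R / 2) ^ s)⁻¹ =
      C * (2 ^ s) ^ 2 / c ^ 2 * ((R ^ s)⁻¹ * (C * R ^ s)⁻¹) := by
    rw [Real.div_rpow hR.le zero_le_two]
    field_simp
  calc (μ (closedBall x (R / 2)))⁻¹ * (μ (closedBall x (R / 2)))⁻¹
      ≤ (ENNReal.ofReal (c * (R / 2) ^ s))⁻¹ * (ENNReal.ofReal (c * (R / 2) ^ s))⁻¹ := by gcongr
    _ = ENNReal.ofReal (C * (2 ^ s) ^ 2 / c ^ 2) *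
          ((ENNReal.ofReal R ^ s)⁻¹ * (ENNReal.ofReal (C * R ^ s))⁻¹) := by
        rw [ENNReal.ofReal_rpow_of_pos hR, ← ENNReal.ofReal_inv_of_pos (by positivity),
          ← ENNReal.ofReal_inv_of_pos (by positivity), ← ENNReal.ofReal_inv_of_pos (by positivity),
          ← ENNReal.ofReal_mul (by positivity), ← ENNReal.ofReal_mul (by positivity),
          ← ENNReal.ofReal_mul (by positivity), hreal]
    _ ≤ ENNReal.ofReal (C * (2 ^ s) ^ 2 / c ^ 2) *
          ((ENNReal.ofReal R ^ s)⁻¹ * (μ (closedBall y R))⁻¹) := by gcongr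

end AhlforsRegularity

section GaugeEnergy

variable {X : Type*} [MetricSpace X] [MeasurableSpace X]

/-- The density `R⁻ˢ ζ(B_R(x)) ⨍_{B_R(x)} χ_Ω(z) W(z, x) dμ(z)` of the gauge energy at scale `R`;
`χ_Ω` is encoded by integrating over `B_R(x) ∩ Ω` while still normalising by `μ (B_R(x))`. -/
noncomputable def gaugeEnergyDensity (μ : Measure X) (s : ℝ) (Ω : Set X) (W : X → X → ℝ≥0∞)
    (ζ : Set X → ℝ≥0∞) (R : ℝ) (x : X) : ℝ≥0∞ :=
  (ENNReal.ofReal R ^ s)⁻¹ * ζ (closedBall x R) *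
    ((μ (closedBall x R))⁻¹ * ∫⁻ z in closedBall x R ∩ Ω, W z x ∂μ)

/-- The points of `Ω` at which the double average at scale `R / 2`, weighted by `η`, is at least
`t`; points too close to the complement of `Ω` are left out. -/
def concentrationSet (μ : Measure X) (Ω : Set X) (W : X → X → ℝ≥0∞) (R : ℝ) (η t : ℝ≥0∞) :
    Set X :=
  {x ∈ Ω | closedBall x (R / 2) ⊆ Ω ∧ t ≤ η * doubleAvg μ W x (R / 2)}

variable {μ : Measure X} {s : ℝ} {Ω : Set X} {W : X → X → ℝ≥0∞} {ζ : Set X → ℝ≥0∞}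
  {R : ℝ} {K Λ : ℝ≥0}

theorem doubleAvg_swap (hW : Measurable fun p : X × X => W p.1 p.2) (x : X) (r : ℝ) :
    doubleAvg μ W x r = (μ (closedBall x r))⁻¹ * (μ (closedBall x r))⁻¹ *
      ∫⁻ y in closedBall x r, ∫⁻ z in closedBall x r, W z y ∂μ ∂μ := by
  rcases eq_or_ne (μ (closedBall x r)) ⊤ with htop | hfin
  · simp [doubleAvg, htop]
  · have : IsFiniteMeasure (μ.restrict (closedBall x r)) := isFiniteMeasure_restrict.2 hfin
    rw [doubleAvg, lintegral_lintegral_swap hW.aemeasurable]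

theorem gauge_mul_doubleAvg_le [OpensMeasurableSpace X]
    (hW : Measurable fun p : X × X => W p.1 p.2) {x : X} (hxΩ : closedBall x (R / 2) ⊆ Ω)
    (hζ : ∀ y ∈ closedBall x (R / 2), ζ (closedBall x R) ≤ Λ * ζ (closedBall y R))
    (hμ : ∀ y ∈ closedBall x (R / 2),
      (μ (closedBall x (R / 2)))⁻¹ * (μ (closedBall x (R / 2)))⁻¹ ≤
        K * ((ENNReal.ofReal R ^ s)⁻¹ * (μ (closedBall y R))⁻¹)) :
    ζ (closedBall x R) * doubleAvg μ W x (R / 2) ≤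
      Λ * K * ∫⁻ y in closedBall x (R / 2), gaugeEnergyDensity μ s Ω W ζ R y ∂μ := by
  have hball {y : X} (hy : y ∈ closedBall x (R / 2)) :
      closedBall x (R / 2) ⊆ closedBall y R ∩ Ω :=
    subset_inter (closedBall_subset_closedBall' (by linarith [mem_closedBall'.1 hy])) hxΩ
  rw [doubleAvg_swap hW, ← mul_assoc, ← ENNReal.coe_mul,
    ← lintegral_const_mul' _ _ ENNReal.coe_ne_top]
  refine (lintegral_const_mul_le _ _).trans
    (setLIntegral_mono' measurableSet_closedBall fun y hy => ?_)
  calc ζ (closedBall x R) * ((μ (closedBall x (R / 2)))⁻¹ * (μ (closedBall x (R / 2)))⁻¹) *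
        ∫⁻ z in closedBall x (R / 2), W z y ∂μ
      ≤ (Λ * ζ (closedBall y R)) * (K * ((ENNReal.ofReal R ^ s)⁻¹ * (μ (closedBall y R))⁻¹)) *
          ∫⁻ z in closedBall y R ∩ Ω, W z y ∂μ :=
        mul_le_mul' (mul_le_mul' (hζ y hy) (hμ y hy)) (lintegral_mono_set (hball hy))
    _ = ↑(Λ * K) * gaugeEnergyDensity μ s Ω W ζ R y := by
        rw [gaugeEnergyDensity, ENNReal.coe_mul]
        ring

theorem caraPreOuter_concentrationSet_le [OpensMeasurableSpace X] {δ : ℝ} {η t : ℝ≥0∞}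
    (hW : Measurable fun p : X × X => W p.1 p.2) (hΩ : MeasurableSet Ω) (hR : 0 ≤ R)
    (hRδ : 2 * R ≤ δ) (ht : t ≠ 0) (ht' : t ≠ ⊤) (hpos : ∀ x ∈ Ω, ζ (closedBall x R) ≠ 0)
    (hζ : ∀ x ∈ Ω, ∀ y ∈ closedBall x (R / 2), ζ (closedBall x R) ≤ Λ * ζ (closedBall y R))
    (hμ : ∀ x ∈ Ω, ∀ y ∈ Ω, (μ (closedBall x (R / 2)))⁻¹ * (μ (closedBall x (R / 2)))⁻¹ ≤
      K * ((ENNReal.ofReal R ^ s)⁻¹ * (μ (closedBall y R))⁻¹)) :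
    caraPreOuter ζ δ (concentrationSet μ Ω W R η t) ≤
      t⁻¹ * (Λ * K) * (η * ∫⁻ x in Ω, gaugeEnergyDensity μ s Ω W ζ R x ∂μ) := by
  set f := gaugeEnergyDensity μ s Ω W ζ R
  set ν := (t⁻¹ * η * (Λ * K)) • μ.withDensity f with hν
  have hν_apply {B : Set X} (hB : MeasurableSet B) :
      ν B = t⁻¹ * η * (Λ * K) * ∫⁻ x in B, f x ∂μ := by
    rw [hν, Measure.smul_apply, smul_eq_mul, withDensity_apply _ hB]
  have hgauge : ∀ x ∈ concentrationSet μ Ω W R η t,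
      ζ (closedBall x R) ≤ ν (closedBall x (R / 2)) := by
    rintro x ⟨hx, hxΩ, hxt⟩
    calc ζ (closedBall x R) = t⁻¹ * t * ζ (closedBall x R) := by
          rw [ENNReal.inv_mul_cancel ht ht', one_mul]
      _ ≤ t⁻¹ * (η * doubleAvg μ W x (R / 2)) * ζ (closedBall x R) := by gcongr
      _ = t⁻¹ * η * (ζ (closedBall x R) * doubleAvg μ W x (R / 2)) := by ring
      _ ≤ t⁻¹ * η * (Λ * K * ∫⁻ y in closedBall x (R / 2), f y ∂μ) :=
          mul_le_mul' le_rfl <|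
            gauge_mul_doubleAvg_le hW hxΩ (hζ x hx) fun y hy => hμ x hx y (hxΩ hy)
      _ = ν (closedBall x (R / 2)) := by rw [hν_apply measurableSet_closedBall, ← mul_assoc]
  calc caraPreOuter ζ δ (concentrationSet μ Ω W R η t) ≤ ν Ω :=
        caraPreOuter_le_measure_of_forall_closedBall hR hRδ (fun x hx => hx.2.1)
          (fun x hx => hpos x hx.1) hgauge
    _ = t⁻¹ * (Λ * K) * (η * ∫⁻ x in Ω, f x ∂μ) := by rw [hν_apply hΩ]; ring

theorem setOf_not_tendsto_subset_iUnion_limsup_concentrationSet {ε : ℕ → ℝ} {η : ℕ → ℝ≥0∞}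
    (hΩ : IsOpen Ω) (hε : Tendsto ε atTop (𝓝 0)) :
    {x ∈ Ω | ¬ Tendsto (fun n => η n * doubleAvg μ W x (ε n / 2)) atTop (𝓝 0)} ⊆
      ⋃ k : ℕ, limsup (fun n => concentrationSet μ Ω W (ε n) (η n) (k + 1 : ℝ≥0∞)⁻¹) atTop := by
  rintro x ⟨hx, hnot⟩
  obtain ⟨k, hk⟩ := exists_nat_frequently_inv_le_of_not_tendsto_zero hnot
  have hball : ∀ᶠ n in atTop, closedBall x (ε n / 2) ⊆ Ω := by
    have hhalf : Tendsto (fun n => ε n / 2) atTop (𝓝 0) := by simpa using hε.div_const 2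
    exact hhalf.eventually (eventually_closedBall_subset (hΩ.mem_nhds hx))
  exact mem_iUnion.2 ⟨k, mem_limsup_iff_frequently_mem.2 <|
    (hk.and_eventually hball).mono fun n hn => ⟨hx, hn.2, hn.1⟩⟩

theorem caraPreOuter_limsup_concentrationSet_eq_zero [OpensMeasurableSpace X] {δ : ℝ} {t : ℝ≥0∞}
    {ε : ℕ → ℝ} {η : ℕ → ℝ≥0∞}
    (hW : Measurable fun p : X × X => W p.1 p.2) (hΩ : MeasurableSet Ω)
    (hδ : 0 < δ) (ht : t ≠ 0) (ht' : t ≠ ⊤) (hε : Tendsto ε atTop (𝓝[>] 0))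
    (hpos : ∀ᶠ R in 𝓝[>] (0 : ℝ), ∀ x ∈ Ω, ζ (closedBall x R) ≠ 0)
    (hζ : ∀ᶠ R in 𝓝[>] (0 : ℝ), ∀ x ∈ Ω, ∀ y ∈ closedBall x (R / 2),
      ζ (closedBall x R) ≤ Λ * ζ (closedBall y R))
    (hμ : HasInvMeasureBound μ s Ω K)
    (hsum : ∑' n, η n * ∫⁻ x in Ω, gaugeEnergyDensity μ s Ω W ζ (ε n) x ∂μ ≠ ⊤) :
    caraPreOuter ζ δ (limsup (fun n => concentrationSet μ Ω W (ε n) (η n) t) atTop) = 0 := by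
  refine measure_limsup_atTop_eq_zero_of_eventually_le
    (a := fun n => t⁻¹ * (Λ * K) * (η n * ∫⁻ x in Ω, gaugeEnergyDensity μ s Ω W ζ (ε n) x ∂μ)) ?_ ?_
  · rw [ENNReal.tsum_mul_left]
    finiteness
  have hsmall : ∀ᶠ R in 𝓝[>] (0 : ℝ), R < δ / 2 :=
    nhdsWithin_le_nhds (eventually_lt_nhds (half_pos hδ))
  filter_upwards [hε.eventually self_mem_nhdsWithin, hε.eventually hsmall, hε.eventually hpos,
    hε.eventually hζ, hε.eventually hμ] with n (hn : 0 < ε n) hnδ hnpos hnζ hnμ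
  exact caraPreOuter_concentrationSet_le hW hΩ hn.le (by linarith) ht ht' hnpos hnζ hnμ

end GaugeEnergy

theorem statement11_general {X : Type*} [MetricSpace X] [MeasurableSpace X]
    [OpensMeasurableSpace X] {Ω : Set X} (hΩ : IsOpen Ω) {μ : Measure X} {s : ℝ} (hs : 0 ≤ s)
    (hAhl : IsAhlforsRegularOn μ s Ω) {ε : ℕ → ℝ} {η : ℕ → ℝ≥0∞}
    (hε : Tendsto ε atTop (𝓝[>] 0)) {W : X → X → ℝ≥0∞}
    (hW : Measurable fun p : X × X => W p.1 p.2) {ζ : Set X → ℝ≥0∞} {Λ : ℝ≥0}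
    (hpos : ∀ᶠ R in 𝓝[>] (0 : ℝ), ∀ x ∈ Ω, ζ (closedBall x R) ≠ 0)
    (hζ : ∀ᶠ R in 𝓝[>] (0 : ℝ), ∀ x ∈ Ω, ∀ y ∈ closedBall x (R / 2),
      ζ (closedBall x R) ≤ Λ * ζ (closedBall y R))
    (hsum : ∑' n, η n * ∫⁻ x in Ω, gaugeEnergyDensity μ s Ω W ζ (ε n) x ∂μ ≠ ⊤) :
    caraMeas ζ {x ∈ Ω | 0 < limsup (fun n => η n * doubleAvg μ W x (ε n / 2)) atTop} = 0 ∧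
    caraMeas ζ {x ∈ Ω | ¬ Tendsto (fun n => η n * doubleAvg μ W x (ε n / 2)) atTop (𝓝 0)} = 0 := by
  simp only [limsup_pos_iff_not_tendsto_zero, and_self]
  obtain ⟨K, hK⟩ := hAhl.exists_hasInvMeasureBound hs hΩ
  refine caraMeas_eq_zero_of_forall_caraPreOuter fun δ hδ => measure_mono_null
    (setOf_not_tendsto_subset_iUnion_limsup_concentrationSet hΩ (hε.mono_right nhdsWithin_le_nhds))
    (measure_iUnion_null fun k => ?_)
  exact caraPreOuter_limsup_concentrationSet_eq_zero hW hΩ.measurableSet hδ (by simp) (by simp)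
    hε hpos hζ hK hsum

/-- Part 3 of the abstract fine-property theorem: if the series of weighted
`ζ`-energies converges, then the set `A` where the limsup of the weighted double
averages at half scale is positive is `ψ`-null; in particular, the set of points of
`Ω` where these quantities do not tend to `0` is `ψ`-null. -/
theorem statement11 {X : Type*} [MetricSpace X] [MeasurableSpace X] [BorelSpace X]
    (Ω : Set X) (hΩ : IsOpen Ω) (μ : Measure X) (s : ℝ) (hs : 0 < s)
    (hAhl : ∃ c C : ℝ, 0 < c ∧ 0 < C ∧ ∀ x ∈ Ω, ∀ ρ : ℝ, 0 < ρ →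
      ENNReal.ofReal ρ < EMetric.diam Ω →
      ENNReal.ofReal (c * ρ ^ s) ≤ μ (closedBall x ρ) ∧
        μ (closedBall x ρ) ≤ ENNReal.ofReal (C * ρ ^ s))
    (ε η : ℕ → ℝ) (hε : ∀ n, 0 < ε n) (hη : ∀ n, 0 < η n)
    (hεlim : Tendsto ε atTop (𝓝 0))
    (W : X → X → ℝ≥0∞) (hWmeas : Measurable (fun p : X × X => W p.1 p.2))
    (hWloc : ∀ x ∈ Ω, ∀ R : ℝ, 0 < R →
      ∫⁻ z in closedBall x R ∩ Ω, ∫⁻ y in closedBall x R ∩ Ω, W z y ∂μ ∂μ < ⊤)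
    (ζ : Set X → ℝ≥0∞)
    (I γ γ' lam lam' : ℝ≥0∞) (hI : 0 < I) (hγ : 0 < γ) (hγ' : 0 < γ')
    (hlam : 0 < lam) (hlamtop : lam ≠ ⊤) (hlam' : 0 < lam') (hlam'top : lam' ≠ ⊤)
    (hζfin : ∀ (x : X) (R : ℝ), 0 < R → ENNReal.ofReal R < I →
      0 < ζ (closedBall x R) ∧ ζ (closedBall x R) < ⊤)
    (hζdbl : ∀ (x : X) (R : ℝ), 0 < R → ENNReal.ofReal R < γ →
      ζ (closedBall x (5 * R)) ≤ lam * ζ (closedBall x R))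
    (hζcomp : ∀ (x y : X) (R : ℝ), 0 < R → ENNReal.ofReal R < γ' →
      y ∈ closedBall x (R / 2) → ζ (closedBall x R) ≤ lam' * ζ (closedBall y R))
    (hζmeas : ∀ R : ℝ, 0 < R → AEMeasurable (fun x : X => ζ (closedBall x R)) μ)
    (hsum : ∑' n, ENNReal.ofReal (η n) *
            ∫⁻ x in Ω, (ENNReal.ofReal (ε n) ^ s)⁻¹ * ζ (closedBall x (ε n)) *
              ((μ (closedBall x (ε n)))⁻¹ *
                ∫⁻ z in closedBall x (ε n) ∩ Ω, W z x ∂μ) ∂μ < ⊤) :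
    caraMeas ζ {x ∈ Ω | 0 < limsup (fun n =>
        ENNReal.ofReal (η n) * doubleAvg μ W x (ε n / 2)) atTop} = 0 ∧
    caraMeas ζ {x ∈ Ω | ¬ Tendsto (fun n =>
        ENNReal.ofReal (η n) * doubleAvg μ W x (ε n / 2)) atTop (𝓝 0)} = 0 := by
  lift lam' to ℝ≥0 using hlam'top
  exact statement11_general hΩ hs.le hAhl
    (tendsto_nhdsWithin_iff.2 ⟨hεlim, Eventually.of_forall hε⟩) hWmeas
    (eventually_nhdsGT_zero_of_forall_ofReal_lt hI fun R hR hRI x _ => (hζfin x R hR hRI).1.ne')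
    (eventually_nhdsGT_zero_of_forall_ofReal_lt hγ' fun R hR hRγ x _ y => hζcomp x y R hR hRγ)
    hsum.ne
end

section
/- Let X be a metric space, let Σ be the collection of all closed balls in X, and let F : Σ → [0,∞] be monotone increasing (A ⊂ B, A,B ∈ Σ implies F(A) ≤ F(B)). Fix ξ ∈ (0,∞) and α ∈ [0,∞). Define D_seq := { x ∈ X : limsup_{n→∞} (n^α / e^{−nξ}) F(B_{e^{−n}}(x)) > 0 } and D := { x ∈ X : limsup_{σ→0⁺} (|ln σ|^α / σ^ξ) F(B_σ(x)) > 0 }. Then D = D_seq. -/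
open MeasureTheory Metric Filter Set
open scoped ENNReal Topology

/-!
For `e^{-(n+1)} < σ ≤ e^{-n}` with `n ≥ 1`, the numbers `σ` and `e^{-n}` differ by a factor of at
most `e`, and `|ln σ|` and `n` by a factor of at most `2`. Hence the weights `|ln σ|^α / σ^ξ` and
`n^α / e^{-nξ}` are comparable up to a constant, and since `F` grows with the radius, the quantity
at `σ` is bounded by a constant multiple of the one at `e^{-n}`. The other inequality holds because
the radii `e^{-n}` tend to `0⁺`.
-/

theorem rpow_le_rpow_abs_mul_rpow {x y c : ℝ} (hy : 0 < y) (hyx : y ≤ x) (hxc : x ≤ c * y)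
    (p : ℝ) : x ^ p ≤ c ^ |p| * y ^ p := by
  have hx : 0 ≤ x := hy.le.trans hyx
  have one_le_ratio : 1 ≤ x / y := (one_le_div hy).2 hyx
  have ratio_le : x / y ≤ c := (div_le_iff₀ hy).2 hxc
  rw [← div_le_iff₀ (Real.rpow_pos_of_pos hy p), ← Real.div_rpow hx hy.le]
  calc (x / y) ^ p ≤ (x / y) ^ |p| :=
        Real.rpow_le_rpow_of_exponent_le one_le_ratio (le_abs_self p)
    _ ≤ c ^ |p| := Real.rpow_le_rpow (by positivity) ratio_le (abs_nonneg p)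

theorem limsup_pos_of_eventually_le_const_mul_comp {ι κ : Type*} {l : Filter ι} {l' : Filter κ}
    {u : ι → ℝ≥0∞} {v : κ → ℝ≥0∞} {φ : ι → κ} {C : ℝ≥0∞} (hC : C ≠ ∞) (hφ : Tendsto φ l l')
    (huv : ∀ᶠ i in l, u i ≤ C * v (φ i)) (hu : 0 < limsup u l) : 0 < limsup v l' := by
  have limsup_u_le : limsup u l ≤ C * limsup v l' :=
    calc limsup u l ≤ limsup (fun i => C * v (φ i)) l := limsup_le_limsup huv
      _ = C * limsup (v ∘ φ) l := ENNReal.limsup_const_mul_of_ne_top hC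
      _ ≤ C * limsup v l' := by gcongr; exact limsup_le_limsup_of_le (u := v) hφ
  exact (CanonicallyOrderedAdd.mul_pos.1 (hu.trans_le limsup_u_le)).2

theorem tendsto_exp_neg_natCast_nhdsGT_zero :
    Tendsto (fun n : ℕ => Real.exp (-(n : ℝ))) atTop (𝓝[>] 0) :=
  Real.tendsto_exp_atBot_nhdsGT.comp
    (tendsto_neg_atTop_atBot.comp tendsto_natCast_atTop_atTop)

/-- The exponential scale of `0 < σ ≤ 1`: the index `n` with `e^{-(n+1)} < σ ≤ e^{-n}`. Truncation
of the floor to `ℕ` makes it `0` for every `σ > 1`. -/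
noncomputable def expScale (σ : ℝ) : ℕ := ⌊-Real.log σ⌋₊

theorem tendsto_expScale : Tendsto expScale (𝓝[>] 0) atTop :=
  tendsto_nat_floor_atTop.comp (tendsto_neg_atBot_atTop.comp Real.tendsto_log_nhdsGT_zero)

section expScale

variable {σ : ℝ}

theorem le_exp_neg_expScale (hσ : 0 < σ) (hσ_le : σ ≤ 1) : σ ≤ Real.exp (-(expScale σ : ℝ)) := by
  have floor_le : (expScale σ : ℝ) ≤ -Real.log σ :=
    Nat.floor_le (neg_nonneg.2 (Real.log_nonpos hσ.le hσ_le))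
  exact (Real.log_le_iff_le_exp hσ).1 (le_neg_of_le_neg floor_le)

theorem exp_neg_expScale_le (hσ : 0 < σ) : Real.exp (-(expScale σ : ℝ)) ≤ Real.exp 1 * σ := by
  have lt_floor_add_one : -Real.log σ < expScale σ + 1 := Nat.lt_floor_add_one _
  calc Real.exp (-(expScale σ : ℝ)) ≤ Real.exp (1 + Real.log σ) :=
        Real.exp_le_exp.2 (by linarith)
    _ = Real.exp 1 * σ := by rw [Real.exp_add, Real.exp_log hσ]

theorem one_le_neg_log_of_one_le_expScale (hn : 1 ≤ expScale σ) : 1 ≤ -Real.log σ :=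
  (Nat.one_le_floor_iff _).1 hn

theorem le_one_of_one_le_expScale (hσ : 0 < σ) (hn : 1 ≤ expScale σ) : σ ≤ 1 := by
  have one_le_neg_log : 1 ≤ -Real.log σ := one_le_neg_log_of_one_le_expScale hn
  exact (Real.log_nonpos_iff hσ.le).1 (by linarith)

theorem expScale_le_abs_log (hn : 1 ≤ expScale σ) : (expScale σ : ℝ) ≤ |Real.log σ| := by
  have one_le_neg_log : 1 ≤ -Real.log σ := one_le_neg_log_of_one_le_expScale hn
  exact (Nat.floor_le (by linarith)).trans (neg_le_abs _)

theorem abs_log_le_two_mul_expScale (hn : 1 ≤ expScale σ) : |Real.log σ| ≤ 2 * expScale σ := by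
  have one_le_neg_log : 1 ≤ -Real.log σ := one_le_neg_log_of_one_le_expScale hn
  have half_lt_floor : -Real.log σ / 2 < expScale σ := Nat.div_two_lt_floor one_le_neg_log
  rw [abs_of_nonpos (by linarith)]
  linarith

theorem abs_log_rpow_div_rpow_le (hσ : 0 < σ) (hn : 1 ≤ expScale σ) (ξ α : ℝ) :
    |Real.log σ| ^ α / σ ^ ξ ≤ 2 ^ |α| * Real.exp 1 ^ |ξ| *
      ((expScale σ : ℝ) ^ α / Real.exp (-(expScale σ : ℝ)) ^ ξ) := by
  have log_rpow_le : |Real.log σ| ^ α ≤ 2 ^ |α| * (expScale σ : ℝ) ^ α :=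
    rpow_le_rpow_abs_mul_rpow (by exact_mod_cast hn) (expScale_le_abs_log hn)
      (abs_log_le_two_mul_expScale hn) α
  have exp_rpow_le : Real.exp (-(expScale σ : ℝ)) ^ ξ ≤ Real.exp 1 ^ |ξ| * σ ^ ξ :=
    rpow_le_rpow_abs_mul_rpow hσ (le_exp_neg_expScale hσ (le_one_of_one_le_expScale hσ hn))
      (exp_neg_expScale_le hσ) ξ
  rw [← mul_div_assoc, div_le_div_iff₀ (by positivity) (by positivity)]
  calc |Real.log σ| ^ α * Real.exp (-(expScale σ : ℝ)) ^ ξ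
      ≤ (2 ^ |α| * (expScale σ : ℝ) ^ α) * (Real.exp 1 ^ |ξ| * σ ^ ξ) := by gcongr
    _ = 2 ^ |α| * Real.exp 1 ^ |ξ| * (expScale σ : ℝ) ^ α * σ ^ ξ := by ring

theorem weighted_le_const_mul_weighted_expScale {f : ℝ → ℝ≥0∞} (hf : MonotoneOn f (Ioi 0))
    (hσ : 0 < σ) (hn : 1 ≤ expScale σ) (ξ α : ℝ) :
    ENNReal.ofReal (|Real.log σ| ^ α / σ ^ ξ) * f σ ≤
      ENNReal.ofReal (2 ^ |α| * Real.exp 1 ^ |ξ|) *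
        (ENNReal.ofReal ((expScale σ : ℝ) ^ α / Real.exp (-(expScale σ : ℝ)) ^ ξ) *
          f (Real.exp (-(expScale σ : ℝ)))) := by
  rw [← mul_assoc, ← ENNReal.ofReal_mul (by positivity)]
  gcongr
  · exact abs_log_rpow_div_rpow_le hσ hn ξ α
  · exact hf hσ (Real.exp_pos _) (le_exp_neg_expScale hσ (le_one_of_one_le_expScale hσ hn))

end expScale

theorem statement16_general {f : ℝ → ℝ≥0∞} (hf : MonotoneOn f (Ioi 0)) (ξ α : ℝ) :
    0 < limsup (fun σ : ℝ => ENNReal.ofReal (|Real.log σ| ^ α / σ ^ ξ) * f σ) (𝓝[>] 0) ↔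
      0 < limsup (fun n : ℕ =>
        ENNReal.ofReal ((n : ℝ) ^ α / Real.exp (-(n : ℝ)) ^ ξ) * f (Real.exp (-(n : ℝ))))
          atTop := by
  constructor
  · refine limsup_pos_of_eventually_le_const_mul_comp
      (C := ENNReal.ofReal (2 ^ |α| * Real.exp 1 ^ |ξ|)) ENNReal.ofReal_ne_top tendsto_expScale ?_
    filter_upwards [self_mem_nhdsWithin, tendsto_expScale.eventually_ge_atTop 1] with σ hσ hn
    exact weighted_le_const_mul_weighted_expScale hf hσ hn ξ α
  · refine limsup_pos_of_eventually_le_const_mul_comp ENNReal.one_ne_top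
      tendsto_exp_neg_natCast_nhdsGT_zero (Eventually.of_forall fun n => ?_)
    simp only [Real.log_exp, abs_neg, Nat.abs_cast, one_mul, le_refl]

/-- For a monotone set function `F` on closed balls, the set where
`limsup_{σ→0⁺} (|ln σ|^α / σ^ξ) F(B_σ(x)) > 0` coincides with the set where the
corresponding sequential limsup along the radii `σ = e^{-n}` is positive. -/
theorem statement16 {X : Type*} [MetricSpace X]
    (F : Set X → ℝ≥0∞)
    (hmono : ∀ (x₁ x₂ : X) (r₁ r₂ : ℝ), 0 < r₁ → 0 < r₂ →
      closedBall x₁ r₁ ⊆ closedBall x₂ r₂ →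
      F (closedBall x₁ r₁) ≤ F (closedBall x₂ r₂))
    (ξ α : ℝ) (hξ : 0 < ξ) (hα : 0 ≤ α) :
    {x : X | 0 < Filter.limsup (fun σ : ℝ =>
        ENNReal.ofReal (|Real.log σ| ^ α / σ ^ ξ) * F (closedBall x σ)) (𝓝[>] (0 : ℝ))}
      = {x : X | 0 < Filter.limsup (fun n : ℕ =>
        ENNReal.ofReal ((n : ℝ) ^ α / Real.exp (-(n : ℝ)) ^ ξ) *
          F (closedBall x (Real.exp (-(n : ℝ))))) Filter.atTop} :=
  Set.ext fun x => statement16_general (f := fun r => F (closedBall x r))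
    (fun r hr s hs hrs => hmono x x r s hr hs (closedBall_subset_closedBall hrs)) ξ α
end

section
/- Let X be a metric space, μ an Ahlfors s-regular measure on X for some s ∈ (0,∞), 0 ≤ r ≤ 1 and 0 < q < ∞ with rq ≤ s, (Y,ρ) a complete metric space, and u ∈ B^r_{q,∞}(X,μ;Y). Define N := { x ∈ X : for every y ∈ Y, limsup_{ε→0⁺} ⨍_{B_ε(x)} ρ(u(z),y)^q dμ(z) > 0 }. If β > q + 1, then Λ^{s−rq,β}(N) = 0. Moreover, for every x ∈ X \ N there exists u*(x) ∈ Y such that lim_{ε→0⁺} ⨍_{B_ε(x)} ρ(u(z),u*(x))^q dμ(z) = 0; that is, Λ^{s−rq,β}-almost every point of X is a Lebesgue point of u, and in particular the Hausdorff dimension of N is at most s − rq. -/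
open MeasureTheory Metric Filter Set
open scoped ENNReal Topology

/-- A Borel measure `μ` on a metric space is Ahlfors `s`-regular. -/
def IsAhlfors {X : Type*} [MetricSpace X] [MeasurableSpace X]
    (μ : Measure X) (s : ℝ) : Prop :=
  ∃ c C : ℝ, 0 < c ∧ 0 < C ∧ ∀ (x : X) (ρ : ℝ), 0 < ρ →
    ENNReal.ofReal ρ < EMetric.diam (Set.univ : Set X) →
    ENNReal.ofReal (c * ρ ^ s) ≤ μ (closedBall x ρ) ∧
      μ (closedBall x ρ) ≤ ENNReal.ofReal (C * ρ ^ s)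

/-- `u ∈ B^r_{q,∞}(X,μ;Y)`. -/
def MemBesov {X Y : Type*} [MetricSpace X] [MeasurableSpace X] [MetricSpace Y]
    [MeasurableSpace Y] [BorelSpace Y]
    (μ : Measure X) (r q : ℝ) (u : X → Y) : Prop :=
  Measurable u ∧
  (∀ (x : X) (R : ℝ), 0 < R →
    ∫⁻ z in closedBall x R, ∫⁻ y in closedBall x R, edist (u z) (u y) ^ q ∂μ ∂μ < ⊤) ∧
  (⨆ (t : ℝ) (_ : 0 < t),
    ∫⁻ x, (ENNReal.ofReal t ^ (r * q))⁻¹ *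
      ((μ (closedBall x t))⁻¹ * ∫⁻ z in closedBall x t, edist (u x) (u z) ^ q ∂μ) ∂μ) < ⊤

/-- The gauge function `g_{s,β}` on `[0,∞]`. -/
noncomputable def glogE (s β : ℝ) (r : ℝ≥0∞) : ℝ≥0∞ :=
  if r = 0 then 0 else if r = 1 then ⊤ else if r = ⊤ then ⊤
  else ENNReal.ofReal (r.toReal ^ s / |Real.log r.toReal| ^ β)

/-- The `s`-dimensional logarithmic Hausdorff measure with decreasing factor `β`. -/
noncomputable def logHausdorff {X : Type*} [MetricSpace X]
    (s β : ℝ) (E : Set X) : ℝ≥0∞ :=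
  ⨆ (δ : ℝ) (_ : 0 < δ),
    ⨅ (t : ℕ → Set X) (_ : E ⊆ ⋃ n, t n)
      (_ : ∀ n, EMetric.diam (t n) ≤ ENNReal.ofReal δ),
      ∑' n, glogE s β (EMetric.diam (t n))

/-!
The argument is a Borel–Cantelli argument on the dyadic balls `B_{2^{-k}}(x)`. Call `x` bad at
scale `k` if the mean oscillation of `u` over `B_{2^{-k}}(x)` is at least `k^{-γ}`, where
`q < γ < β - 1`.

If `x` is bad at only finitely many scales, then values of `u` typical for consecutive balls are
`O(k^{-γ/q})`-close. As `γ > q` these distances are summable, so by completeness the typical values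
converge, and their limit is the Lebesgue value of `u` at `x`.

Conversely, the balls around a `2^{1-k}`-separated set of points bad at scale `k` are disjoint, each
has mass at least `c 2^{-ks}`, and by doubling each contributes its mass times `k^{-γ}` to the
energy of `u` at scale `2^{1-k}`, which is `O(2^{-krq})`. Hence `O(k^γ 2^{k(s-rq)})` balls of radius
`2^{1-k}` cover the points bad at scale `k`. The gauge of such a ball is `O(2^{-k(s-rq)} k^{-β})`,
so the covers have total gauge `O(∑ k^{γ-β}) < ∞` and the points bad infinitely often are null.
-/

/-- The mean oscillation of `u` over the closed ball `B_t(x)`, measured with the exponent `q`: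
the average of `edist (u a) (u b) ^ q` over pairs of points of the ball. -/
noncomputable def meanOsc {X Y : Type*} [PseudoMetricSpace X] [MeasurableSpace X]
    [PseudoEMetricSpace Y] (μ : Measure X) (q : ℝ) (u : X → Y) (x : X) (t : ℝ) : ℝ≥0∞ :=
  ⨍⁻ a in closedBall x t, ⨍⁻ b in closedBall x t, edist (u a) (u b) ^ q ∂μ ∂μ

/-- The Besov energy of `u` at scale `t`, without the normalizing factor `t ^ (-r * q)`: the
seminorm of `B^r_{q,∞}` is finite when the energy is `O(t ^ (r * q))`. -/
noncomputable def besovEnergy {X Y : Type*} [PseudoMetricSpace X] [MeasurableSpace X]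
    [PseudoEMetricSpace Y] (μ : Measure X) (q : ℝ) (u : X → Y) (t : ℝ) : ℝ≥0∞ :=
  ∫⁻ x, ⨍⁻ z in closedBall x t, edist (u x) (u z) ^ q ∂μ ∂μ

/-- The set `N` of points at which `u` has no Lebesgue value with respect to the exponent `q`. -/
def nonLebesgueSet {X Y : Type*} [PseudoMetricSpace X] [MeasurableSpace X]
    [PseudoEMetricSpace Y] (μ : Measure X) (q : ℝ) (u : X → Y) : Set X :=
  {x | ∀ y, 0 < limsup (fun ε : ℝ ↦ ⨍⁻ z in closedBall x ε, edist (u z) y ^ q ∂μ) (𝓝[>] 0)}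

section Average

variable {X : Type*} [MeasurableSpace X] {μ : Measure X} {s t : Set X} {f g : X → ℝ≥0∞}

lemma setLAverage_le_mul_setLAverage {L : ℝ≥0∞} (hL : L ≠ ⊤) (hst : s ⊆ t)
    (h : μ t ≤ L * μ s) (f : X → ℝ≥0∞) :
    ⨍⁻ x in s, f x ∂μ ≤ L * ⨍⁻ x in t, f x ∂μ := by
  rcases eq_or_ne (μ s) 0 with hs₀ | -
  · simp [setLAverage_eq, Measure.restrict_eq_zero.mpr hs₀]
  rcases eq_or_ne (μ s) ⊤ with hs | hs
  · simp [setLAverage_eq, hs]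
  have ht : μ t ≠ ⊤ := ne_top_of_le_ne_top (ENNReal.mul_ne_top hL hs) h
  rw [setLAverage_eq]
  refine ENNReal.div_le_of_le_mul ?_
  calc ∫⁻ x in s, f x ∂μ ≤ ∫⁻ x in t, f x ∂μ := lintegral_mono_set hst
    _ = μ t * ⨍⁻ x in t, f x ∂μ := (measure_mul_setLAverage f ht).symm
    _ ≤ L * μ s * ⨍⁻ x in t, f x ∂μ := by gcongr
    _ = L * (⨍⁻ x in t, f x ∂μ) * μ s := by ring

lemma exists_mem_lt_of_setLAverage_lt {θ : ℝ≥0∞} (hsm : MeasurableSet s) (hs₀ : μ s ≠ 0)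
    (hs : μ s ≠ ⊤) (h : ⨍⁻ x in s, f x ∂μ < θ) : ∃ x ∈ s, f x < θ := by
  contrapose! h
  calc θ = ⨍⁻ _ in s, θ ∂μ := (setLAverage_const hs₀ hs θ).symm
    _ ≤ ⨍⁻ x in s, f x ∂μ := by
      simp only [setLAverage_eq]
      exact ENNReal.div_le_div_right (setLIntegral_mono' hsm h) _

lemma laverage_add_rpow_le {q : ℝ} (hq : 0 ≤ q) (hf : AEMeasurable f μ) :
    ⨍⁻ x, (f x + g x) ^ q ∂μ ≤ 2 ^ q * (⨍⁻ x, f x ^ q ∂μ + ⨍⁻ x, g x ^ q ∂μ) := by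
  simp only [laverage_eq, ← ENNReal.add_div, ← mul_div_assoc]
  gcongr
  rw [← lintegral_add_left' (hf.pow_const q),
    ← lintegral_const_mul' _ _ (ENNReal.rpow_ne_top_of_nonneg hq ENNReal.ofNat_ne_top)]
  gcongr with x
  exact ENNReal.add_rpow_le_two_rpow_mul_rpow_add_rpow _ _ hq

variable {Y : Type*} [PseudoEMetricSpace Y] [MeasurableSpace Y] [OpensMeasurableSpace Y]
  {u : X → Y} {q : ℝ}

lemma laverage_edist_rpow_le_add (hq : 0 ≤ q) (hu : AEMeasurable u μ) (y w : Y) :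
    ⨍⁻ z, edist (u z) w ^ q ∂μ ≤ 2 ^ q * (⨍⁻ z, edist (u z) y ^ q ∂μ + edist y w ^ q) := by
  calc ⨍⁻ z, edist (u z) w ^ q ∂μ
      ≤ ⨍⁻ z, (edist (u z) y + edist y w) ^ q ∂μ := by
        simp only [laverage_eq]
        gcongr with z
        exact edist_triangle _ _ _
    _ ≤ 2 ^ q * (⨍⁻ z, edist (u z) y ^ q ∂μ + ⨍⁻ _, edist y w ^ q ∂μ) :=
        laverage_add_rpow_le hq (measurable_edist_left.comp_aemeasurable hu)
    _ ≤ 2 ^ q * (⨍⁻ z, edist (u z) y ^ q ∂μ + edist y w ^ q) := by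
        gcongr
        rw [laverage_eq, lintegral_const]
        exact ENNReal.div_le_of_le_mul le_rfl

lemma edist_rpow_le_laverage_add [IsFiniteMeasure μ] [NeZero μ] (hq : 0 ≤ q)
    (hu : AEMeasurable u μ) (y w : Y) :
    edist y w ^ q ≤ 2 ^ q * (⨍⁻ z, edist (u z) y ^ q ∂μ + ⨍⁻ z, edist (u z) w ^ q ∂μ) := by
  calc edist y w ^ q = ⨍⁻ _, edist y w ^ q ∂μ := (laverage_const μ _).symm
    _ ≤ ⨍⁻ z, (edist (u z) y + edist (u z) w) ^ q ∂μ := by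
        simp only [laverage_eq]
        gcongr with z
        exact edist_triangle_left _ _ _
    _ ≤ _ := laverage_add_rpow_le hq (measurable_edist_left.comp_aemeasurable hu)

end Average

lemma tsum_mul_add_succ_rpow_ne_top {θ : ℕ → ℝ≥0∞} {A D : ℝ≥0∞} {p : ℝ} (hp : 0 ≤ p) (hA : A ≠ ⊤)
    (hD : D ≠ ⊤) (hθ : ∑' k, θ k ^ p ≠ ⊤) : ∑' k, (A * (D * θ k + θ (k + 1))) ^ p ≠ ⊤ := by
  have htop : ∀ {a : ℝ≥0∞}, a ≠ ⊤ → a ^ p ≠ ⊤ := ENNReal.rpow_ne_top_of_nonneg hp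
  have hbound : ∀ k, (A * (D * θ k + θ (k + 1))) ^ p ≤
      A ^ p * (2 ^ p * (D ^ p * θ k ^ p + θ (k + 1) ^ p)) := fun k ↦ by
    rw [ENNReal.mul_rpow_of_nonneg _ _ hp, ← ENNReal.mul_rpow_of_nonneg D (θ k) hp]
    gcongr
    exact ENNReal.add_rpow_le_two_rpow_mul_rpow_add_rpow _ _ hp
  refine ne_top_of_le_ne_top ?_ (ENNReal.tsum_le_tsum hbound)
  simp only [ENNReal.tsum_mul_left, ENNReal.tsum_add]
  have hθ' : ∑' k, θ (k + 1) ^ p ≠ ⊤ := ne_top_of_le_ne_top hθ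
    (ENNReal.tsum_comp_le_tsum_of_injective (add_left_injective 1) fun k ↦ θ k ^ p)
  exact ENNReal.mul_ne_top (htop hA) (ENNReal.mul_ne_top (htop ENNReal.ofNat_ne_top)
    (ENNReal.add_ne_top.mpr ⟨ENNReal.mul_ne_top (htop hD) hθ, hθ'⟩))

section LebesguePoints

variable {X : Type*} [PseudoMetricSpace X] [MeasurableSpace X] {μ : Measure X} {x : X}

lemma eventually_measure_closedBall_lt_top [IsLocallyFiniteMeasure μ] (x : X) :
    ∀ᶠ ε in 𝓝[>] (0 : ℝ), μ (closedBall x ε) < ⊤ := by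
  obtain ⟨U, hU, hμU⟩ := μ.finiteAt_nhds x
  filter_upwards [nhdsWithin_le_nhds (eventually_closedBall_subset hU)] with ε hε
  exact (measure_mono hε).trans_lt hμU

lemma tendsto_half_pow_nhdsGT_zero :
    Tendsto (fun k : ℕ ↦ (1 / 2 : ℝ) ^ k) atTop (𝓝[>] 0) :=
  tendsto_pow_atTop_nhdsWithin_zero_of_lt_one one_half_pos one_half_lt_one

lemma tendsto_setLAverage_closedBall_of_half_pow [IsUnifLocDoublingMeasure μ] {f : X → ℝ≥0∞}
    (h : Tendsto (fun k : ℕ ↦ ⨍⁻ z in closedBall x ((1 / 2 : ℝ) ^ k), f z ∂μ) atTop (𝓝 0)) :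
    Tendsto (fun ε ↦ ⨍⁻ z in closedBall x ε, f z ∂μ) (𝓝[>] (0 : ℝ)) (𝓝 0) := by
  set D := IsUnifLocDoublingMeasure.doublingConstant μ
  have hD : Tendsto (fun k : ℕ ↦ D * ⨍⁻ z in closedBall x ((1 / 2 : ℝ) ^ k), f z ∂μ)
      atTop (𝓝 0) := by
    simpa using ENNReal.Tendsto.const_mul h (Or.inr ENNReal.coe_ne_top)
  rw [ENNReal.tendsto_nhds_zero]
  intro δ hδ
  obtain ⟨k₀, hk₀⟩ := eventually_atTop.mp (ENNReal.tendsto_nhds_zero.mp hD δ hδ)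
  filter_upwards [Ioo_mem_nhdsGT (show (0 : ℝ) < (1 / 2) ^ k₀ by positivity),
    IsUnifLocDoublingMeasure.eventually_measure_le_doublingConstant_mul μ] with ε hε hdoubling
  obtain ⟨k, hk, hεk⟩ := exists_nat_pow_near_of_lt_one hε.1
    (hε.2.le.trans (pow_le_one₀ one_half_pos.le one_half_lt_one.le)) one_half_pos one_half_lt_one
  have hk₀k : k₀ < k + 1 :=
    (pow_lt_pow_iff_right_of_lt_one₀ one_half_pos one_half_lt_one).mp (hk.trans hε.2)
  refine (setLAverage_le_mul_setLAverage ENNReal.coe_ne_top (closedBall_subset_closedBall hεk)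
    ((measure_mono (closedBall_subset_closedBall ?_)).trans (hdoubling x)) f).trans
    (hk₀ k (Nat.lt_succ_iff.mp hk₀k))
  rw [pow_succ] at hk
  linarith

variable {Y : Type*} [PseudoEMetricSpace Y] {u : X → Y} {q : ℝ}

lemma notMem_nonLebesgueSet_iff : x ∉ nonLebesgueSet μ q u ↔
    ∃ y, Tendsto (fun ε ↦ ⨍⁻ z in closedBall x ε, edist (u z) y ^ q ∂μ) (𝓝[>] (0 : ℝ)) (𝓝 0) := by
  simp only [nonLebesgueSet, mem_ofPred_eq, not_forall, not_lt]
  exact exists_congr fun y ↦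
    ⟨fun h ↦ tendsto_of_le_liminf_of_limsup_le bot_le h, fun h ↦ h.limsup_eq.le⟩

lemma nonLebesgueSet_eq_empty_of_subsingleton [Subsingleton X] (hq : 0 < q) :
    nonLebesgueSet μ q u = ∅ := by
  refine eq_empty_of_forall_notMem fun x ↦ notMem_nonLebesgueSet_iff.mpr ⟨u x, ?_⟩
  have hzero : ∀ z, edist (u z) (u x) ^ q = 0 := fun z ↦ by
    rw [Subsingleton.elim z x, edist_self, ENNReal.zero_rpow_of_pos hq]
  simp [hzero]

lemma exists_tendsto_of_eventually_edist_le [CompleteSpace Y] {y : ℕ → Y} {d : ℕ → ℝ≥0∞}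
    (hd : ∑' n, d n ≠ ⊤) (h : ∀ᶠ n in atTop, edist (y n) (y (n + 1)) ≤ d n) :
    ∃ w, Tendsto y atTop (𝓝 w) := by
  obtain ⟨N, hN⟩ := eventually_atTop.mp h
  have hdN : ∑' n, d (n + N) ≠ ⊤ :=
    ne_top_of_le_ne_top hd (ENNReal.tsum_comp_le_tsum_of_injective (add_left_injective N) d)
  have hcauchy : CauchySeq fun n ↦ y (n + N) :=
    cauchySeq_of_edist_le_of_tsum_ne_top _ (fun n ↦ by
      simpa only [add_right_comm, Nat.succ_eq_add_one] using hN (n + N) (N.le_add_left n)) hdN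
  obtain ⟨w, hw⟩ := cauchySeq_tendsto_of_complete hcauchy
  exact ⟨w, (tendsto_add_atTop_iff_nat N).mp hw⟩

variable [IsLocallyFiniteMeasure μ] [μ.IsOpenPosMeasure]

lemma eventually_exists_setLAverage_lt_of_meanOsc_lt [OpensMeasurableSpace X] {θ : ℕ → ℝ≥0∞}
    (h : ∀ᶠ k in atTop, meanOsc μ q u x ((1 / 2) ^ k) < θ k) :
    ∀ᶠ k in atTop, ∃ y, ⨍⁻ z in closedBall x ((1 / 2) ^ k), edist (u z) y ^ q ∂μ < θ k := by
  filter_upwards [h,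
    tendsto_half_pow_nhdsGT_zero.eventually (eventually_measure_closedBall_lt_top (μ := μ) x)]
    with k hk hfin
  obtain ⟨a, -, ha⟩ := exists_mem_lt_of_setLAverage_lt measurableSet_closedBall
    (measure_closedBall_pos μ x (by positivity)).ne' hfin.ne hk
  exact ⟨u a, by simpa only [edist_comm] using ha⟩

variable [MeasurableSpace Y] [OpensMeasurableSpace Y]

lemma eventually_edist_rpow_le_of_setLAverage_lt [IsUnifLocDoublingMeasure μ] (hq : 0 ≤ q)
    (hu : AEMeasurable u μ) {θ : ℕ → ℝ≥0∞} {y : ℕ → Y}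
    (h : ∀ᶠ k in atTop, ⨍⁻ z in closedBall x ((1 / 2) ^ k), edist (u z) (y k) ^ q ∂μ < θ k) :
    ∀ᶠ k in atTop, edist (y k) (y (k + 1)) ^ q ≤
      2 ^ q * (IsUnifLocDoublingMeasure.doublingConstant μ * θ k + θ (k + 1)) := by
  have hscale := tendsto_half_pow_nhdsGT_zero.comp (tendsto_add_atTop_nat 1)
  filter_upwards [h, (tendsto_add_atTop_nat 1).eventually h,
    hscale.eventually (eventually_measure_closedBall_lt_top (μ := μ) x),
    hscale.eventually (IsUnifLocDoublingMeasure.eventually_measure_le_doublingConstant_mul μ)]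
    with k hk hk' hfin hdoubling
  set B := closedBall x ((1 / 2 : ℝ) ^ (k + 1))
  have hB : B ⊆ closedBall x ((1 / 2 : ℝ) ^ k) := closedBall_subset_closedBall
    (pow_le_pow_of_le_one one_half_pos.le one_half_lt_one.le k.le_succ)
  have hμB : μ (closedBall x ((1 / 2 : ℝ) ^ k)) ≤
      IsUnifLocDoublingMeasure.doublingConstant μ * μ B := by
    rw [show (1 / 2 : ℝ) ^ k = 2 * (1 / 2) ^ (k + 1) by ring]
    exact hdoubling x
  have : IsFiniteMeasure (μ.restrict B) := isFiniteMeasure_restrict.mpr hfin.ne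
  have : NeZero (μ.restrict B) :=
    ⟨Measure.restrict_eq_zero.not.mpr (measure_closedBall_pos μ x (by positivity)).ne'⟩
  calc edist (y k) (y (k + 1)) ^ q
      ≤ 2 ^ q * (⨍⁻ z in B, edist (u z) (y k) ^ q ∂μ +
          ⨍⁻ z in B, edist (u z) (y (k + 1)) ^ q ∂μ) :=
        edist_rpow_le_laverage_add hq hu.restrict _ _
    _ ≤ 2 ^ q * (IsUnifLocDoublingMeasure.doublingConstant μ * θ k + θ (k + 1)) := by
        gcongr
        exact (setLAverage_le_mul_setLAverage ENNReal.coe_ne_top hB hμB _).trans (by gcongr)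

theorem exists_tendsto_setLAverage_of_meanOsc_lt [OpensMeasurableSpace X] [CompleteSpace Y]
    [IsUnifLocDoublingMeasure μ] (hq : 0 < q) (hu : AEMeasurable u μ) {θ : ℕ → ℝ≥0∞}
    (hθ : ∑' k, θ k ^ q⁻¹ ≠ ⊤)
    (h : ∀ᶠ k in atTop, meanOsc μ q u x ((1 / 2) ^ k) < θ k) :
    ∃ y, Tendsto (fun ε ↦ ⨍⁻ z in closedBall x ε, edist (u z) y ^ q ∂μ) (𝓝[>] (0 : ℝ)) (𝓝 0) := by
  obtain ⟨y, hy⟩ := (eventually_exists_setLAverage_lt_of_meanOsc_lt h).choice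
  have hdist := eventually_edist_rpow_le_of_setLAverage_lt hq.le hu hy
  obtain ⟨w, hw⟩ := exists_tendsto_of_eventually_edist_le
    (tsum_mul_add_succ_rpow_ne_top (inv_nonneg.mpr hq.le)
      (ENNReal.rpow_ne_top_of_nonneg hq.le ENNReal.ofNat_ne_top) ENNReal.coe_ne_top hθ)
    (hdist.mono fun k hk ↦ (ENNReal.le_rpow_inv_iff hq).mpr hk)
  refine ⟨w, tendsto_setLAverage_closedBall_of_half_pow ?_⟩
  have hθ₀ : Tendsto θ atTop (𝓝 0) := by
    have := (ENNReal.tendsto_atTop_zero_of_tsum_ne_top hθ).ennrpow_const q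
    simpa [← ENNReal.rpow_mul, hq.ne', hq] using this
  have hw₀ : Tendsto (fun k ↦ edist (y k) w ^ q) atTop (𝓝 0) := by
    simpa [hq] using (tendsto_iff_edist_tendsto_0.mp hw).ennrpow_const q
  have hbound : Tendsto (fun k ↦ 2 ^ q * (θ k + edist (y k) w ^ q)) atTop (𝓝 0) := by
    simpa using ENNReal.Tendsto.const_mul (hθ₀.add hw₀)
      (Or.inr (ENNReal.rpow_ne_top_of_nonneg hq.le ENNReal.ofNat_ne_top))
  refine tendsto_of_tendsto_of_tendsto_of_le_of_le' tendsto_const_nhds hbound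
    (Eventually.of_forall fun _ ↦ bot_le) ?_
  filter_upwards [hy] with k hk
  exact (laverage_edist_rpow_le_add hq.le hu.restrict (y k) w).trans (by gcongr)

end LebesguePoints

section Covering

lemma pairwiseDisjoint_closedBall_of_isSeparated {X : Type*} [PseudoMetricSpace X] {t : ℝ}
    {C : Set X} (hC : IsSeparated (ENNReal.ofReal (2 * t)) C) :
    C.PairwiseDisjoint (closedBall · t) := by
  intro a ha b hb hab
  refine Set.disjoint_left.mpr fun z hza hzb ↦ (hC ha hb hab).not_ge ?_
  rw [edist_dist]
  gcongr
  linarith [mem_closedBall.mp hza, mem_closedBall.mp hzb, dist_triangle_left a b z]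

variable {X Y : Type*} [PseudoMetricSpace X] [MeasurableSpace X] [OpensMeasurableSpace X]
  [PseudoEMetricSpace Y] {μ : Measure X} {q t : ℝ} {u : X → Y} {L : ℝ≥0∞}

lemma measure_mul_meanOsc_le (hL : L ≠ ⊤) {a : X}
    (ha : μ (closedBall a (3 * t)) ≤ L * μ (closedBall a t)) :
    μ (closedBall a t) * meanOsc μ q u a t ≤
      ∫⁻ x in closedBall a t, L * ⨍⁻ z in closedBall x (2 * t), edist (u x) (u z) ^ q ∂μ ∂μ := by
  have hpoint : ∀ x ∈ closedBall a t, ⨍⁻ z in closedBall a t, edist (u x) (u z) ^ q ∂μ ≤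
      L * ⨍⁻ z in closedBall x (2 * t), edist (u x) (u z) ^ q ∂μ := fun x hx ↦ by
    have hxa := mem_closedBall.mp hx
    refine setLAverage_le_mul_setLAverage hL (closedBall_subset_closedBall' ?_)
      ((measure_mono (closedBall_subset_closedBall' ?_)).trans ha) _
    · linarith [dist_comm a x]
    · linarith
  calc μ (closedBall a t) * meanOsc μ q u a t
      ≤ ∫⁻ x in closedBall a t, ⨍⁻ z in closedBall a t, edist (u x) (u z) ^ q ∂μ ∂μ := by
        rw [meanOsc, setLAverage_eq]
        exact ENNReal.mul_div_le
    _ ≤ _ := setLIntegral_mono' measurableSet_closedBall hpoint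

lemma tsum_measure_mul_meanOsc_le (hL : L ≠ ⊤) {C : Set X}
    (hC : IsSeparated (ENNReal.ofReal (2 * t)) C)
    (hdoubling : ∀ a ∈ C, μ (closedBall a (3 * t)) ≤ L * μ (closedBall a t)) :
    ∑' a : C, μ (closedBall (a : X) t) * meanOsc μ q u a t ≤ L * besovEnergy μ q u (2 * t) := by
  rw [ENNReal.tsum_eq_iSup_sum]
  refine iSup_le fun F ↦ ?_
  have hdisj : (F : Set C).PairwiseDisjoint fun a ↦ closedBall (a : X) t := fun a _ b _ hab ↦
    pairwiseDisjoint_closedBall_of_isSeparated hC a.2 b.2 (Subtype.coe_ne_coe.mpr hab)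
  calc ∑ a ∈ F, μ (closedBall (a : X) t) * meanOsc μ q u a t
      ≤ ∑ a ∈ F, ∫⁻ x in closedBall (a : X) t,
          L * ⨍⁻ z in closedBall x (2 * t), edist (u x) (u z) ^ q ∂μ ∂μ :=
        Finset.sum_le_sum fun a _ ↦ measure_mul_meanOsc_le hL (hdoubling a a.2)
    _ = ∫⁻ x in ⋃ a ∈ F, closedBall (a : X) t,
          L * ⨍⁻ z in closedBall x (2 * t), edist (u x) (u z) ^ q ∂μ ∂μ :=
        (lintegral_biUnion_finset hdisj (fun _ _ ↦ measurableSet_closedBall) _).symm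
    _ ≤ ∫⁻ x, L * ⨍⁻ z in closedBall x (2 * t), edist (u x) (u z) ^ q ∂μ ∂μ :=
        setLIntegral_le_lintegral _ _
    _ = L * besovEnergy μ q u (2 * t) := lintegral_const_mul' _ _ hL

lemma packingNumber_meanOsc_mul_le (hL : L ≠ ⊤) {m θ : ℝ≥0∞}
    (hm : ∀ a, m ≤ μ (closedBall a t))
    (hdoubling : ∀ a, μ (closedBall a (3 * t)) ≤ L * μ (closedBall a t)) :
    packingNumber (2 * t).toNNReal {x | θ ≤ meanOsc μ q u x t} * (m * θ) ≤
      L * besovEnergy μ q u (2 * t) := by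
  simp only [packingNumber, ENat.toENNReal_iSup, ENNReal.iSup_mul]
  refine iSup₂_le fun C hCθ ↦ iSup_le fun hC ↦ ?_
  rw [← ENNReal.tsum_set_const]
  refine (ENNReal.tsum_le_tsum fun a ↦ ?_).trans
    (tsum_measure_mul_meanOsc_le hL hC fun a _ ↦ hdoubling a)
  gcongr
  exacts [hm a, hCθ a.2]

theorem exists_eventually_coveringNumber_meanOsc_le [IsUnifLocDoublingMeasure μ] {c s M α : ℝ}
    (hc : 0 < c) (hμ : ∀ᶠ t in 𝓝[>] (0 : ℝ), ∀ x, ENNReal.ofReal (c * t ^ s) ≤ μ (closedBall x t))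
    (hu : ∀ᶠ t in 𝓝[>] (0 : ℝ), besovEnergy μ q u t ≤ ENNReal.ofReal (M * t ^ α)) :
    ∃ K, ∀ᶠ t in 𝓝[>] (0 : ℝ), ∀ θ > 0,
      (coveringNumber (2 * t).toNNReal {x | ENNReal.ofReal θ ≤ meanOsc μ q u x t} : ℝ≥0∞) ≤
        ENNReal.ofReal (K * t ^ (α - s) / θ) := by
  set L := IsUnifLocDoublingMeasure.scalingConstantOf μ 3
  refine ⟨L * M * 2 ^ α / c, ?_⟩
  filter_upwards [hμ, eventually_nhdsGT_zero_mul_left two_pos hu, self_mem_nhdsWithin,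
    IsUnifLocDoublingMeasure.eventually_measure_le_scaling_constant_mul μ 3]
    with t hμt hut ht hdoubling θ hθ
  have ht : 0 < t := ht
  have hmass : 0 < c * t ^ s * θ := by positivity
  have hcover := ENat.toENNReal_le.mpr (coveringNumber_le_packingNumber (2 * t).toNNReal
    {x | ENNReal.ofReal θ ≤ meanOsc μ q u x t})
  refine hcover.trans ((ENNReal.mul_le_mul_iff_left (ENNReal.ofReal_pos.mpr hmass).ne'
    ENNReal.ofReal_ne_top).mp ?_)
  calc (packingNumber (2 * t).toNNReal {x | ENNReal.ofReal θ ≤ meanOsc μ q u x t} : ℝ≥0∞)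
        * ENNReal.ofReal (c * t ^ s * θ)
      ≤ L * besovEnergy μ q u (2 * t) := by
        rw [ENNReal.ofReal_mul (by positivity)]
        exact packingNumber_meanOsc_mul_le ENNReal.coe_ne_top hμt hdoubling
    _ ≤ ENNReal.ofReal (L * (M * (2 * t) ^ α)) := by
        rw [ENNReal.ofReal_mul L.coe_nonneg, ENNReal.ofReal_coe_nnreal]
        gcongr
    _ = ENNReal.ofReal (L * M * 2 ^ α / c * t ^ (α - s) / θ) * ENNReal.ofReal (c * t ^ s * θ) := by
        rw [← ENNReal.ofReal_mul' hmass.le, Real.mul_rpow zero_le_two ht.le,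
          Real.rpow_sub ht]
        congr 1
        field_simp

end Covering

section HausdorffMeasure

lemma glogE_ofReal {σ β x : ℝ} (hx₀ : 0 < x) (hx₁ : x < 1) :
    glogE σ β (ENNReal.ofReal x) = ENNReal.ofReal (x ^ σ / |Real.log x| ^ β) := by
  simp [glogE, hx₀, hx₀.le, hx₁.ne]

lemma glogE_le_of_le_ofReal {σ β d : ℝ} (hσ : 0 ≤ σ) (hβ : 0 ≤ β) (hd₁ : d < 1) {D : ℝ≥0∞}
    (hD : D ≤ ENNReal.ofReal d) :
    glogE σ β D ≤ ENNReal.ofReal (d ^ σ / |Real.log d| ^ β) := by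
  obtain ⟨x, hx₀, rfl⟩ : ∃ x : ℝ, 0 ≤ x ∧ D = ENNReal.ofReal x :=
    ⟨D.toReal, ENNReal.toReal_nonneg,
      (ENNReal.ofReal_toReal (ne_top_of_le_ne_top ENNReal.ofReal_ne_top hD)).symm⟩
  rcases hx₀.eq_or_lt with rfl | hx₀
  · simp [glogE]
  have hxd : x ≤ d := (ENNReal.ofReal_le_ofReal_iff' ..).mp hD |>.resolve_right hx₀.not_ge
  have hd₀ : 0 < d := hx₀.trans_le hxd
  have hlogd : Real.log d < 0 := Real.log_neg hd₀ hd₁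
  have hlog : |Real.log d| ≤ |Real.log x| := by
    rw [abs_of_neg hlogd]
    exact (neg_le_neg (Real.log_le_log hx₀ hxd)).trans (neg_le_abs _)
  have hlog₀ : 0 < |Real.log d| := abs_pos.mpr hlogd.ne
  rw [glogE_ofReal hx₀ (hxd.trans_lt hd₁)]
  gcongr

lemma exists_eventually_glogE_le {σ β : ℝ} (hσ : 0 ≤ σ) (hβ : 0 ≤ β) (A : ℝ) (hA : 0 < A) :
    ∃ K > 0, ∀ᶠ k : ℕ in atTop, ∀ D ≤ ENNReal.ofReal (A * (1 / 2) ^ k),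
      glogE σ β D ≤ ENNReal.ofReal (K * ((1 / 2) ^ k) ^ σ * (k : ℝ) ^ (-β)) := by
  have hlog2 : 0 < Real.log 2 := Real.log_pos one_lt_two
  refine ⟨A ^ σ * (2 / Real.log 2) ^ β, by positivity, ?_⟩
  have hlarge : ∀ᶠ k : ℕ in atTop, 2 * Real.log A < k * Real.log 2 :=
    (tendsto_natCast_atTop_atTop.atTop_mul_const hlog2).eventually_gt_atTop _
  filter_upwards [hlarge, eventually_gt_atTop 0] with k hk hk₀ D hD
  have hk₀ : (0 : ℝ) < k := by exact_mod_cast hk₀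
  set d : ℝ := A * (1 / 2) ^ k
  have hlogd : Real.log d = Real.log A - k * Real.log 2 := by
    rw [Real.log_mul hA.ne' (by positivity), Real.log_pow, one_div, Real.log_inv]
    ring
  have hlogd_le : k / (2 / Real.log 2) ≤ -Real.log d := by
    rw [hlogd, div_div_eq_mul_div]
    linarith
  have hlogd_pos : 0 < -Real.log d := lt_of_lt_of_le (by positivity) hlogd_le
  have hd₁ : d < 1 := (Real.log_neg_iff (by positivity)).mp (neg_pos.mp hlogd_pos)
  refine (glogE_le_of_le_ofReal hσ hβ hd₁ hD).trans (ENNReal.ofReal_le_ofReal ?_)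
  calc d ^ σ / |Real.log d| ^ β ≤ d ^ σ / (k / (2 / Real.log 2)) ^ β := by
        gcongr
        exact hlogd_le.trans (neg_le_abs _)
    _ = A ^ σ * (2 / Real.log 2) ^ β * ((1 / 2) ^ k) ^ σ * (k : ℝ) ^ (-β) := by
        rw [Real.mul_rpow hA.le (by positivity), Real.div_rpow hk₀.le (by positivity),
          Real.rpow_neg hk₀.le, div_div_eq_mul_div]
        ring

lemma eventually_rpow_le_glogE {σ β d : ℝ} (hd : 0 < d) (hσd : σ < d) :
    ∀ᶠ D in 𝓝 (0 : ℝ≥0∞), D ^ d ≤ glogE σ β D := by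
  have hlog : ∀ᶠ x in 𝓝[>] (0 : ℝ), |Real.log x| ^ β ≤ x ^ (σ - d) := by
    filter_upwards [(isLittleO_abs_log_rpow_rpow_nhdsGT_zero β (sub_neg.mpr hσd)).bound one_pos,
      self_mem_nhdsWithin] with x hx hx₀
    simpa [abs_of_nonneg (Real.rpow_nonneg (abs_nonneg (Real.log x)) β),
      abs_of_nonneg (Real.rpow_nonneg (le_of_lt hx₀) (σ - d))] using hx
  have htoReal : Tendsto ENNReal.toReal (𝓝 0) (𝓝 0) := by
    simpa using ENNReal.tendsto_toReal ENNReal.zero_ne_top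
  filter_upwards [htoReal.eventually (eventually_nhdsWithin_iff.mp hlog),
    eventually_lt_nhds one_pos] with D hD hD₁
  rcases eq_or_ne D 0 with rfl | hD₀
  · simp [hd]
  have hDt : D ≠ ⊤ := hD₁.ne_top
  have hx₀ : 0 < D.toReal := ENNReal.toReal_pos hD₀ hDt
  have hx₁ : D.toReal < 1 := ENNReal.toReal_lt_of_lt_ofReal (by simpa using hD₁)
  have hlog₀ : 0 < |Real.log D.toReal| := abs_pos.mpr (Real.log_neg hx₀ hx₁).ne
  rw [← ENNReal.ofReal_toReal hDt, glogE_ofReal hx₀ hx₁, ENNReal.ofReal_rpow_of_pos hx₀]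
  refine ENNReal.ofReal_le_ofReal ((le_div_iff₀ (by positivity)).mpr ?_)
  calc D.toReal ^ d * |Real.log D.toReal| ^ β ≤ D.toReal ^ d * D.toReal ^ (σ - d) := by
        gcongr
        exact hD hx₀
    _ = D.toReal ^ σ := by rw [← Real.rpow_add hx₀, add_sub_cancel]

lemma tendsto_iSup_nat_add_zero {f : ℕ → ℝ≥0∞} (hf : Tendsto f atTop (𝓝 0)) :
    Tendsto (fun N ↦ ⨆ k, f (k + N)) atTop (𝓝 0) := by
  rw [← hf.limsup_eq, limsup_eq_iInf_iSup_of_nat']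
  exact tendsto_atTop_iInf fun M N hMN ↦ iSup_le fun k ↦
    le_iSup_of_le (k + (N - M)) (by rw [add_assoc, Nat.sub_add_cancel hMN])

lemma logHausdorff_eq_mkMetric {X : Type*} [MetricSpace X] [MeasurableSpace X] [BorelSpace X]
    (σ β : ℝ) (E : Set X) :
    logHausdorff σ β E = Measure.mkMetric (glogE σ β) E := by
  have hgauge : ∀ A : Set X, ⨆ _ : A.Nonempty, glogE σ β (ediam A) = glogE σ β (ediam A) := by
    intro A
    rcases A.eq_empty_or_nonempty with rfl | hA
    · simp [glogE]
    · simp [hA]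
  rw [Measure.mkMetric_apply]
  simp only [hgauge]
  refine le_antisymm (iSup₂_le fun δ hδ ↦ ?_) (iSup₂_le fun r hr ↦ ?_)
  · exact le_iSup₂_of_le (ENNReal.ofReal δ) (ENNReal.ofReal_pos.mpr hδ) le_rfl
  · obtain ⟨δ, hδ₀, hδr⟩ := ENNReal.lt_iff_exists_nnreal_btwn.mp hr
    refine le_iSup₂_of_le (δ : ℝ) (by exact_mod_cast hδ₀) ?_
    refine iInf_mono fun t ↦ iInf_mono fun _ ↦ iInf_mono' fun ht ↦
      ⟨fun n ↦ (ht n).trans (by simpa using hδr.le), le_rfl⟩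

variable {X : Type*} [EMetricSpace X] [MeasurableSpace X] [BorelSpace X]

lemma dimH_le_of_mkMetric_glogE_eq_zero {σ β : ℝ} (hσ : 0 ≤ σ) {E : Set X}
    (hE : Measure.mkMetric (glogE σ β) E = 0) : dimH E ≤ ENNReal.ofReal σ := by
  refine dimH_le fun d hd ↦ ?_
  by_contra! hσd
  have hσd : σ < d := (ENNReal.ofReal_lt_coe_iff hσ).mp hσd
  have hle : Measure.hausdorffMeasure (d : ℝ) E ≤ Measure.mkMetric (glogE σ β) E :=
    Measure.mkMetric_mono (eventually_rpow_le_glogE (hσ.trans_lt hσd) hσd) E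
  simp [hd, hE] at hle

theorem mkMetric_limsup_eq_zero_of_coveringNumber_le {m : ℝ≥0∞ → ℝ≥0∞} {G : ℕ → Set X}
    {ε : ℕ → NNReal} {n g : ℕ → ℝ≥0∞} (hε : Tendsto ε atTop (𝓝 0)) (hn : ∀ k, n k ≠ ⊤)
    (hG : ∀ᶠ k in atTop, (coveringNumber (ε k) (G k) : ℝ≥0∞) ≤ n k)
    (hm : ∀ᶠ k in atTop, ∀ D ≤ 2 * (ε k : ℝ≥0∞), m D ≤ g k) (hsum : ∑' k, n k * g k ≠ ⊤) :
    Measure.mkMetric m (limsup G atTop) = 0 := by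
  let C k := minimalCover (ε k) (G k)
  have hG_ne_top : ∀ k, (coveringNumber (ε k) (G k) : ℝ≥0∞) ≤ n k →
      coveringNumber (ε k) (G k) ≠ ⊤ := fun k hk ↦
    ENat.toENNReal_ne_top.mp (ne_top_of_le_ne_top (hn k) hk)
  have hcountable : ∀ k, Countable (C k) := fun k ↦ finite_minimalCover.countable
  have h2ε : Tendsto (fun k ↦ 2 * (ε k : ℝ≥0∞)) atTop (𝓝 0) := by
    simpa using ENNReal.Tendsto.const_mul (ENNReal.tendsto_coe.mpr hε)
      (Or.inr ENNReal.ofNat_ne_top)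
  refine le_antisymm ((Measure.mkMetric_le_liminf_tsum (ι := fun N ↦ Σ k, C (k + N)) _ _
    (tendsto_iSup_nat_add_zero h2ε)
    (fun N a ↦ closedEBall (a.2 : X) (ε (a.1 + N))) (.of_forall fun N a ↦
      ediam_closedEBall_le.trans (le_iSup (fun k ↦ 2 * (ε (k + N) : ℝ≥0∞)) a.1)) ?_ m).trans ?_)
    bot_le
  · filter_upwards [eventually_forall_ge_atTop.mpr hG] with N hN x hx
    obtain ⟨k, hNk, hxk⟩ := (mem_limsup_iff_frequently_mem.mp hx).forall_exists_of_atTop N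
    obtain ⟨a, ha, hxa⟩ := mem_iUnion₂.mp (isCover_iff_subset_iUnion_closedEBall.mp
      (isCover_minimalCover (hG_ne_top k (hN k hNk))) hxk)
    obtain ⟨j, rfl⟩ := Nat.exists_eq_add_of_le' hNk
    exact mem_iUnion.mpr ⟨⟨j, a, ha⟩, hxa⟩
  · refine (ENNReal.tendsto_sum_nat_add _ hsum).liminf_eq ▸ liminf_le_liminf ?_
    filter_upwards [eventually_forall_ge_atTop.mpr hG, eventually_forall_ge_atTop.mpr hm]
      with N hN hmN
    rw [ENNReal.tsum_sigma']
    refine ENNReal.tsum_le_tsum fun k ↦ ?_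
    have hk : N ≤ k + N := N.le_add_left k
    calc ∑' a : C (k + N), m (ediam (closedEBall (a : X) (ε (k + N))))
        ≤ ∑' _ : C (k + N), g (k + N) :=
          ENNReal.tsum_le_tsum fun a ↦ hmN _ hk _ ediam_closedEBall_le
      _ = coveringNumber (ε (k + N)) (G (k + N)) * g (k + N) := by
          rw [ENNReal.tsum_set_const, encard_minimalCover (hG_ne_top _ (hN _ hk))]
      _ ≤ n (k + N) * g (k + N) := by
          gcongr
          exact hN _ hk

end HausdorffMeasure

section NullSet

lemma tsum_ofReal_natCast_rpow_ne_top {p : ℝ} (hp : p < -1) (K : ℝ) :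
    ∑' k : ℕ, ENNReal.ofReal (K * (k : ℝ) ^ p) ≠ ⊤ :=
  ((Real.summable_nat_rpow.mpr hp).mul_left K).tsum_ofReal_ne_top

lemma tsum_ofReal_natCast_rpow_neg_rpow_inv_ne_top {q γ : ℝ} (hq : 0 < q) (hqγ : q < γ) :
    ∑' k : ℕ, ENNReal.ofReal ((k : ℝ) ^ (-γ)) ^ q⁻¹ ≠ ⊤ := by
  have hp : -γ * q⁻¹ < -1 := by
    rw [neg_mul, ← div_eq_mul_inv, neg_lt_neg_iff]
    exact (one_lt_div hq).mpr hqγ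
  convert tsum_ofReal_natCast_rpow_ne_top hp 1 using 3 with k
  rw [ENNReal.ofReal_rpow_of_nonneg (by positivity) (by positivity), one_mul,
    ← Real.rpow_mul k.cast_nonneg]

lemma isOpenPosMeasure_of_le_measure_closedBall {X : Type*} [PseudoMetricSpace X]
    [MeasurableSpace X] {μ : Measure X} {c s : ℝ} (hc : 0 < c)
    (hμ : ∀ᶠ t in 𝓝[>] (0 : ℝ), ∀ x, ENNReal.ofReal (c * t ^ s) ≤ μ (closedBall x t)) :
    μ.IsOpenPosMeasure := by
  refine ⟨fun U hU ⟨x, hx⟩ ↦ ?_⟩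
  have hUx : ∀ᶠ t in 𝓝[>] (0 : ℝ), closedBall x t ⊆ U :=
    nhdsWithin_le_nhds (eventually_closedBall_subset (hU.mem_nhds hx))
  obtain ⟨t, hμt, hUt, ht⟩ := (hμ.and (hUx.and self_mem_nhdsWithin)).exists
  have hct : 0 < c * t ^ s := mul_pos hc (Real.rpow_pos_of_pos ht s)
  exact ((ENNReal.ofReal_pos.mpr hct).trans_le ((hμt x).trans (measure_mono hUt))).ne'

variable {X Y : Type*} [MeasurableSpace X] [PseudoEMetricSpace Y] [CompleteSpace Y]
  [MeasurableSpace Y] [OpensMeasurableSpace Y] {μ : Measure X} {c s q α β M : ℝ} {u : X → Y}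

lemma nonLebesgueSet_subset_limsup [PseudoMetricSpace X] [OpensMeasurableSpace X]
    [IsUnifLocDoublingMeasure μ] [IsLocallyFiniteMeasure μ] [μ.IsOpenPosMeasure]
    (hq : 0 < q) (hu : AEMeasurable u μ) {θ : ℕ → ℝ≥0∞} (hθ : ∑' k, θ k ^ q⁻¹ ≠ ⊤) :
    nonLebesgueSet μ q u ⊆ limsup (fun k ↦ {x | θ k ≤ meanOsc μ q u x ((1 / 2) ^ k)}) atTop := by
  refine fun x hx ↦ mem_limsup_iff_frequently_mem.mpr fun h ↦ notMem_nonLebesgueSet_iff.mpr ?_ hx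
  exact exists_tendsto_setLAverage_of_meanOsc_lt hq hu hθ (h.mono fun k hk ↦ not_le.mp hk)

variable [MetricSpace X] [BorelSpace X] [IsUnifLocDoublingMeasure μ] [IsLocallyFiniteMeasure μ]

theorem mkMetric_glogE_nonLebesgueSet_eq_zero (hc : 0 < c)
    (hμ : ∀ᶠ t in 𝓝[>] (0 : ℝ), ∀ x, ENNReal.ofReal (c * t ^ s) ≤ μ (closedBall x t))
    (hq : 0 < q) (hαs : α ≤ s) (hu : AEMeasurable u μ)
    (hE : ∀ᶠ t in 𝓝[>] (0 : ℝ), besovEnergy μ q u t ≤ ENNReal.ofReal (M * t ^ α))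
    (hβ : q + 1 < β) :
    Measure.mkMetric (glogE (s - α) β) (nonLebesgueSet μ q u) = 0 := by
  have : μ.IsOpenPosMeasure := isOpenPosMeasure_of_le_measure_closedBall hc hμ
  obtain ⟨γ, hqγ, hγβ⟩ := exists_between (lt_sub_iff_add_lt.mpr hβ)
  refine measure_mono_null
    (nonLebesgueSet_subset_limsup hq hu (tsum_ofReal_natCast_rpow_neg_rpow_inv_ne_top hq hqγ)) ?_
  obtain ⟨K, hK⟩ := exists_eventually_coveringNumber_meanOsc_le hc hμ hE
  obtain ⟨K', hK'₀, hK'⟩ := exists_eventually_glogE_le (β := β) (sub_nonneg.mpr hαs) (by linarith)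
    4 four_pos
  refine mkMetric_limsup_eq_zero_of_coveringNumber_le
    (ε := fun k ↦ (2 * (1 / 2) ^ k : ℝ).toNNReal)
    (n := fun k ↦ ENNReal.ofReal (K * ((1 / 2) ^ k) ^ (α - s) / (k : ℝ) ^ (-γ)))
    (g := fun k ↦ ENNReal.ofReal (K' * ((1 / 2) ^ k) ^ (s - α) * (k : ℝ) ^ (-β)))
    ?_ (fun _ ↦ ENNReal.ofReal_ne_top) ?_ ?_ ?_
  · simpa using tendsto_real_toNNReal
      ((tendsto_half_pow_nhdsGT_zero.mono_right nhdsWithin_le_nhds).const_mul 2)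
  · filter_upwards [tendsto_half_pow_nhdsGT_zero.eventually hK, eventually_gt_atTop 0] with k hk hk₀
    exact hk _ (by positivity)
  · filter_upwards [hK'] with k hk D hD
    refine hk D (hD.trans_eq ?_)
    rw [← ENNReal.ofReal, ← ENNReal.ofReal_ofNat, ← ENNReal.ofReal_mul zero_le_two]
    ring_nf
  · refine ne_top_of_le_ne_top
      (tsum_ofReal_natCast_rpow_ne_top (show γ - β < -1 by linarith) (K * K'))
      (ENNReal.tsum_le_tsum fun k ↦ ?_)
    rw [← ENNReal.ofReal_mul' (by positivity)]
    rcases k.eq_zero_or_pos with rfl | hk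
    · simp [Real.zero_rpow (show -γ ≠ 0 by linarith)]
    have hk : (0 : ℝ) < k := by exact_mod_cast hk
    have hpow : (0 : ℝ) < (1 / 2) ^ k := by positivity
    rw [Real.rpow_sub hk, ← neg_sub s α, Real.rpow_neg hpow.le,
      Real.rpow_neg hk.le, Real.rpow_neg hk.le]
    field_simp
    rfl

theorem statement18_general (hc : 0 < c)
    (hμ : ∀ᶠ t in 𝓝[>] (0 : ℝ), ∀ x, ENNReal.ofReal (c * t ^ s) ≤ μ (closedBall x t))
    (hq : 0 < q) (hαs : α ≤ s) (hu : AEMeasurable u μ)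
    (hE : ∀ᶠ t in 𝓝[>] (0 : ℝ), besovEnergy μ q u t ≤ ENNReal.ofReal (M * t ^ α))
    (hβ : q + 1 < β) :
    logHausdorff (s - α) β (nonLebesgueSet μ q u) = 0 ∧
    (∀ x ∉ nonLebesgueSet μ q u, ∃ y,
      Tendsto (fun ε ↦ ⨍⁻ z in closedBall x ε, edist (u z) y ^ q ∂μ) (𝓝[>] (0 : ℝ)) (𝓝 0)) ∧
    dimH (nonLebesgueSet μ q u) ≤ ENNReal.ofReal (s - α) := by
  have hnull := mkMetric_glogE_nonLebesgueSet_eq_zero hc hμ hq hαs hu hE hβ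
  exact ⟨(logHausdorff_eq_mkMetric ..).trans hnull, fun x hx ↦ notMem_nonLebesgueSet_iff.mp hx,
    dimH_le_of_mkMetric_glogE_eq_zero (sub_nonneg.mpr hαs) hnull⟩

end NullSet

section AhlforsRegular

variable {X : Type*} [MetricSpace X] [MeasurableSpace X] {μ : Measure X} {s : ℝ}

lemma IsAhlfors.exists_eventually_measure_closedBall [Nontrivial X] (hμ : IsAhlfors μ s) :
    ∃ c C : ℝ, 0 < c ∧ ∀ᶠ t in 𝓝[>] (0 : ℝ), ∀ x,
      ENNReal.ofReal (c * t ^ s) ≤ μ (closedBall x t) ∧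
        μ (closedBall x t) ≤ ENNReal.ofReal (C * t ^ s) := by
  obtain ⟨c, C, hc, -, h⟩ := hμ
  refine ⟨c, C, hc, ?_⟩
  have hdiam : ∀ᶠ t in 𝓝[>] (0 : ℝ), ENNReal.ofReal t < ediam (univ : Set X) :=
    (ENNReal.continuous_ofReal.tendsto' 0 0 ENNReal.ofReal_zero).eventually_lt_const
      (ediam_pos_iff.mpr nontrivial_univ) |>.filter_mono nhdsWithin_le_nhds
  filter_upwards [hdiam, self_mem_nhdsWithin] with t ht ht₀ x
  exact h x t ht₀ ht

lemma IsAhlfors.isUnifLocDoublingMeasure [Nontrivial X] (hμ : IsAhlfors μ s) :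
    IsUnifLocDoublingMeasure μ := by
  obtain ⟨c, C, hc, h⟩ := hμ.exists_eventually_measure_closedBall
  refine ⟨(C * 2 ^ s / c).toNNReal, ?_⟩
  filter_upwards [h, eventually_nhdsGT_zero_mul_left two_pos h, self_mem_nhdsWithin]
    with t ht h2t ht₀ x
  have ht₀ : 0 < t := ht₀
  calc μ (closedBall x (2 * t)) ≤ ENNReal.ofReal (C * (2 * t) ^ s) := (h2t x).2
    _ = ENNReal.ofReal (C * 2 ^ s / c) * ENNReal.ofReal (c * t ^ s) := by
        rw [← ENNReal.ofReal_mul' (by positivity), Real.mul_rpow zero_le_two ht₀.le]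
        congr 1
        field_simp
    _ ≤ ENNReal.ofReal (C * 2 ^ s / c) * μ (closedBall x t) := by
        gcongr
        exact (ht x).1

lemma IsAhlfors.isLocallyFiniteMeasure [Nontrivial X] (hμ : IsAhlfors μ s) :
    IsLocallyFiniteMeasure μ := by
  obtain ⟨c, C, -, h⟩ := hμ.exists_eventually_measure_closedBall
  obtain ⟨t, ht, ht₀⟩ := (h.and self_mem_nhdsWithin).exists
  exact ⟨fun x ↦ ⟨closedBall x t, closedBall_mem_nhds x ht₀,
    (ht x).2.trans_lt ENNReal.ofReal_lt_top⟩⟩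

lemma MemBesov.exists_eventually_besovEnergy_le {Y : Type*} [MetricSpace Y] [MeasurableSpace Y]
    [BorelSpace Y] {r q : ℝ} {u : X → Y} (hu : MemBesov μ r q u) :
    ∃ M : ℝ, ∀ᶠ t in 𝓝[>] (0 : ℝ),
      besovEnergy μ q u t ≤ ENNReal.ofReal (M * t ^ (r * q)) := by
  obtain ⟨M, hM⟩ := WithTop.ne_top_iff_exists.mp hu.2.2.ne
  refine ⟨M, ?_⟩
  filter_upwards [self_mem_nhdsWithin] with t ht
  have hpow : 0 < t ^ (r * q) := Real.rpow_pos_of_pos ht _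
  have hle := iSup₂_le_iff.mp hM.ge t ht
  rw [ENNReal.ofReal_rpow_of_pos ht, lintegral_const_mul' _ _ (by simpa using hpow)] at hle
  simp only [← ENNReal.div_eq_inv_mul, ← setLAverage_eq] at hle
  rw [ENNReal.ofReal_mul' hpow.le, ENNReal.ofReal_coe_nnreal]
  exact (ENNReal.div_le_iff (by simpa using hpow) ENNReal.ofReal_ne_top).mp hle

end AhlforsRegular

/-- Lebesgue points of Besov functions with complete target: the set `N` of
non-Lebesgue points is `Λ^{s-rq,β}`-null for every `β > q + 1`; every point outside
`N` is a Lebesgue point, and the Hausdorff dimension of `N` is at most `s - rq`. -/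
theorem statement18 {X Y : Type*} [MetricSpace X] [MeasurableSpace X] [BorelSpace X]
    [MetricSpace Y] [MeasurableSpace Y] [BorelSpace Y] [CompleteSpace Y]
    (μ : Measure X) (s r q : ℝ) (hs : 0 < s)
    (hμ : IsAhlfors μ s) (hr0 : 0 ≤ r) (hr1 : r ≤ 1) (hq : 0 < q) (hrq : r * q ≤ s)
    (u : X → Y) (hu : MemBesov μ r q u)
    (N : Set X)
    (hN : N = {x : X | ∀ y : Y, 0 < limsup (fun ε : ℝ =>
        (μ (closedBall x ε))⁻¹ * ∫⁻ z in closedBall x ε, edist (u z) y ^ q ∂μ)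
        (𝓝[>] (0 : ℝ))})
    (β : ℝ) (hβ : q + 1 < β) :
    logHausdorff (s - r * q) β N = 0 ∧
    (∀ x ∉ N, ∃ ustar : Y,
      Tendsto (fun ε : ℝ =>
          (μ (closedBall x ε))⁻¹ * ∫⁻ z in closedBall x ε, edist (u z) ustar ^ q ∂μ)
        (𝓝[>] (0 : ℝ)) (𝓝 0)) ∧
    dimH N ≤ ENNReal.ofReal (s - r * q) := by
  simp only [← ENNReal.div_eq_inv_mul, ← setLAverage_eq] at hN ⊢
  obtain rfl : N = nonLebesgueSet μ q u := hN
  rcases subsingleton_or_nontrivial X with hX | hX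
  · have hempty : nonLebesgueSet μ q u = ∅ := nonLebesgueSet_eq_empty_of_subsingleton hq
    exact ⟨by simp [hempty, logHausdorff_eq_mkMetric], fun x hx ↦ notMem_nonLebesgueSet_iff.mp hx,
      by simp [hempty]⟩
  obtain ⟨c, C, hc, hball⟩ := hμ.exists_eventually_measure_closedBall
  obtain ⟨M, hM⟩ := hu.exists_eventually_besovEnergy_le
  have := hμ.isUnifLocDoublingMeasure
  have := hμ.isLocallyFiniteMeasure
  exact statement18_general hc (hball.mono fun t ht x ↦ (ht x).1) hq hrq hu.1.aemeasurable hM hβ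
end

section
/- Let X be a metric space, μ an Ahlfors s-regular measure on X for some s ∈ (0,∞) with lower regularity constant c, (Y,ρ) a metric space, 0 < r < 1 and 0 < q < ∞. Then W^{r,q}(X,μ;Y) ⊂ B^r_{q,∞}(X,μ;Y); more precisely, for every μ-measurable u : X → Y and every t > 0, ∫_X ⨍_{B_t(x)} ρ(u(x),u(z))^q / t^{rq} dμ(z) dμ(x) ≤ (1/c) ∬_{X×X} ρ(u(x),u(z))^q / d(x,z)^{rq+s} d(μ×μ)(x,z), so that ‖u‖_{B^r_{q,∞}(X,μ;Y)}^q ≤ (1/c) ‖u‖_{W^{r,q}(X,μ;Y)}^q. -/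
open MeasureTheory Metric Filter Set
open scoped ENNReal Topology

/-!
Put `α = rq`. If `z ∈ B_t(x)`, then `d := d(x, z) ≤ t`, so `t^(-α) ≤ d^(-α)`, while lower regularity
gives `μ(B_t(x)) ≥ μ(B_d(x)) ≥ c d^s`. Hence the averaging kernel `1_{B_t(x)}(z) t^(-α) / μ(B_t(x))`
is dominated pointwise by `c⁻¹ d^(-(α + s))`, and it remains to integrate. Lower regularity is only
assumed at radii below the diameter, which `d` may attain; a limit of radii covers that case.
-/

/-- The lower half of Ahlfors `s`-regularity with constant `c`. The radii are strictly below the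
diameter, which is extended-real-valued so that unbounded spaces are included. -/
def IsLowerAhlforsRegular {X : Type*} [PseudoMetricSpace X] [MeasurableSpace X]
    (μ : Measure X) (s c : ℝ) : Prop :=
  ∀ (x : X) (ρ : ℝ), 0 < ρ → ENNReal.ofReal ρ < ediam (univ : Set X) →
    ENNReal.ofReal (c * ρ ^ s) ≤ μ (closedBall x ρ)

namespace IsLowerAhlforsRegular

variable {X : Type*} [PseudoMetricSpace X] [MeasurableSpace X] {μ : Measure X} {s c α : ℝ}

theorem le_measure_closedBall (hμ : IsLowerAhlforsRegular μ s c) (x : X) {R : ℝ} (hR : 0 < R)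
    (hdiam : ENNReal.ofReal R ≤ ediam (univ : Set X)) :
    ENNReal.ofReal (c * R ^ s) ≤ μ (closedBall x R) := by
  have hlim : Tendsto (fun ρ : ℝ => ENNReal.ofReal (c * ρ ^ s)) (𝓝[<] R)
      (𝓝 (ENNReal.ofReal (c * R ^ s))) :=
    (ENNReal.tendsto_ofReal
      ((Real.continuousAt_rpow_const R s (Or.inl hR.ne')).tendsto.const_mul c)).mono_left
        nhdsWithin_le_nhds
  refine le_of_tendsto hlim ?_
  filter_upwards [Ioo_mem_nhdsLT hR] with ρ ⟨hρ, hρR⟩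
  calc ENNReal.ofReal (c * ρ ^ s)
      ≤ μ (closedBall x ρ) :=
        hμ x ρ hρ (((ENNReal.ofReal_lt_ofReal_iff hR).2 hρR).trans_le hdiam)
    _ ≤ μ (closedBall x R) := measure_mono (closedBall_subset_closedBall hρR.le)

theorem mul_edist_rpow_le_measure_closedBall (hμ : IsLowerAhlforsRegular μ s c) (hc : 0 ≤ c)
    {x z : X} (hxz : 0 < dist x z) :
    ENNReal.ofReal c * edist x z ^ s ≤ μ (closedBall x (dist x z)) := by
  rw [edist_dist, ENNReal.ofReal_rpow_of_pos hxz, ← ENNReal.ofReal_mul hc]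
  refine hμ.le_measure_closedBall x hxz ?_
  rw [← edist_dist]
  exact edist_le_ediam_of_mem (mem_univ x) (mem_univ z)

theorem inv_rpow_mul_inv_measure_closedBall_le (hμ : IsLowerAhlforsRegular μ s c) (hc : 0 < c)
    (hα : 0 ≤ α) (hαs : 0 < α + s) {t : ℝ} {x z : X} (hz : z ∈ closedBall x t) :
    (ENNReal.ofReal t ^ α)⁻¹ * (μ (closedBall x t))⁻¹ ≤
      (ENNReal.ofReal c)⁻¹ * (edist x z ^ (α + s))⁻¹ := by
  have hdt : dist x z ≤ t := mem_closedBall'.1 hz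
  rcases (dist_nonneg (x := x) (y := z)).eq_or_lt with hd | hd
  · -- The right-hand side is `⊤`, because `0⁻¹ = ⊤` in `ℝ≥0∞`.
    simp [edist_dist, ← hd, ENNReal.zero_rpow_of_pos hαs, ENNReal.mul_top]
  have hed : edist x z ≠ 0 := by simpa [edist_dist] using hd
  have hradius : edist x z ^ α ≤ ENNReal.ofReal t ^ α :=
    ENNReal.rpow_le_rpow (edist_dist x z ▸ ENNReal.ofReal_le_ofReal hdt) hα
  have hmass : ENNReal.ofReal c * edist x z ^ s ≤ μ (closedBall x t) :=
    (hμ.mul_edist_rpow_le_measure_closedBall hc.le hd).trans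
      (measure_mono (closedBall_subset_closedBall hdt))
  calc (ENNReal.ofReal t ^ α)⁻¹ * (μ (closedBall x t))⁻¹
      ≤ (edist x z ^ α)⁻¹ * (ENNReal.ofReal c * edist x z ^ s)⁻¹ := by gcongr
    _ = (ENNReal.ofReal c)⁻¹ * (edist x z ^ (α + s))⁻¹ := by
      rw [ENNReal.rpow_add _ _ hed (edist_ne_top x z),
        ENNReal.mul_inv (Or.inl (by simpa using hc)) (Or.inl ENNReal.ofReal_ne_top),
        ENNReal.mul_inv (Or.inl (by simp [hed, edist_ne_top]))
          (Or.inl (ENNReal.rpow_ne_top_of_nonneg hα (edist_ne_top x z))),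
        mul_left_comm]

variable [OpensMeasurableSpace X]

theorem inv_rpow_mul_average_closedBall_le (hμ : IsLowerAhlforsRegular μ s c) (hc : 0 < c)
    (hα : 0 ≤ α) (hαs : 0 < α + s) (t : ℝ) (x : X) (f : X → ℝ≥0∞) :
    (ENNReal.ofReal t ^ α)⁻¹ * ((μ (closedBall x t))⁻¹ * ∫⁻ z in closedBall x t, f z ∂μ) ≤
      (ENNReal.ofReal c)⁻¹ * ∫⁻ z, f z / edist x z ^ (α + s) ∂μ := by
  have hpointwise : ∀ z ∈ closedBall x t,
      (ENNReal.ofReal t ^ α)⁻¹ * (μ (closedBall x t))⁻¹ * f z ≤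
        (ENNReal.ofReal c)⁻¹ * (f z / edist x z ^ (α + s)) := fun z hz => by
    rw [div_eq_mul_inv, mul_comm (f z), ← mul_assoc]
    gcongr ?_ * f z
    exact hμ.inv_rpow_mul_inv_measure_closedBall_le hc hα hαs hz
  rw [← mul_assoc]
  calc (ENNReal.ofReal t ^ α)⁻¹ * (μ (closedBall x t))⁻¹ * ∫⁻ z in closedBall x t, f z ∂μ
      ≤ ∫⁻ z in closedBall x t, (ENNReal.ofReal t ^ α)⁻¹ * (μ (closedBall x t))⁻¹ * f z ∂μ :=
        lintegral_const_mul_le _ _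
    _ ≤ ∫⁻ z in closedBall x t, (ENNReal.ofReal c)⁻¹ * (f z / edist x z ^ (α + s)) ∂μ :=
        setLIntegral_mono' measurableSet_closedBall hpointwise
    _ ≤ ∫⁻ z, (ENNReal.ofReal c)⁻¹ * (f z / edist x z ^ (α + s)) ∂μ :=
        setLIntegral_le_lintegral _ _
    _ = (ENNReal.ofReal c)⁻¹ * ∫⁻ z, f z / edist x z ^ (α + s) ∂μ :=
        lintegral_const_mul' _ _ (by simpa using hc)

end IsLowerAhlforsRegular

theorem statement19_general {X : Type*} [PseudoMetricSpace X] [MeasurableSpace X]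
    [OpensMeasurableSpace X] {μ : Measure X} {s c α : ℝ} (hμ : IsLowerAhlforsRegular μ s c)
    (hc : 0 < c) (hα : 0 ≤ α) (hαs : 0 < α + s) (F : X → X → ℝ≥0∞) :
    (⨆ (t : ℝ) (_ : 0 < t), ∫⁻ x, (ENNReal.ofReal t ^ α)⁻¹ *
        ((μ (closedBall x t))⁻¹ * ∫⁻ z in closedBall x t, F x z ∂μ) ∂μ) ≤
      (ENNReal.ofReal c)⁻¹ * ∫⁻ x, ∫⁻ z, F x z / edist x z ^ (α + s) ∂μ ∂μ := by
  refine iSup₂_le fun t _ => ?_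
  rw [← lintegral_const_mul' _ _ (by simpa using hc)]
  exact lintegral_mono fun x => hμ.inv_rpow_mul_average_closedBall_le hc hα hαs t x (F x)

/-- `W^{r,q}(X,μ;Y) ⊆ B^r_{q,∞}(X,μ;Y)`: for an Ahlfors `s`-regular measure with lower
constant `c`, the Besov energy at every scale `t > 0` is dominated by `1/c` times the
fractional Sobolev energy; hence `‖u‖_{B^r_{q,∞}}^q ≤ (1/c) ‖u‖_{W^{r,q}}^q`. -/
theorem statement19 {X Y : Type*} [MetricSpace X] [MeasurableSpace X] [BorelSpace X]
    [MetricSpace Y] [MeasurableSpace Y] [BorelSpace Y]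
    (μ : Measure X) (s : ℝ) (hs : 0 < s)
    (c C : ℝ) (hc : 0 < c) (hC : 0 < C)
    (hAhl : ∀ (x : X) (ρ : ℝ), 0 < ρ →
      ENNReal.ofReal ρ < EMetric.diam (Set.univ : Set X) →
      ENNReal.ofReal (c * ρ ^ s) ≤ μ (closedBall x ρ) ∧
        μ (closedBall x ρ) ≤ ENNReal.ofReal (C * ρ ^ s))
    (r q : ℝ) (hr0 : 0 < r) (hr1 : r < 1) (hq : 0 < q)
    (u : X → Y) (hu : Measurable u) :
    (∀ t : ℝ, 0 < t →
      ∫⁻ x, (ENNReal.ofReal t ^ (r * q))⁻¹ *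
          ((μ (closedBall x t))⁻¹ * ∫⁻ z in closedBall x t, edist (u x) (u z) ^ q ∂μ) ∂μ
        ≤ (ENNReal.ofReal c)⁻¹ *
          ∫⁻ x, ∫⁻ z, edist (u x) (u z) ^ q / edist x z ^ (r * q + s) ∂μ ∂μ) ∧
    (⨆ (t : ℝ) (_ : 0 < t),
      ∫⁻ x, (ENNReal.ofReal t ^ (r * q))⁻¹ *
          ((μ (closedBall x t))⁻¹ * ∫⁻ z in closedBall x t, edist (u x) (u z) ^ q ∂μ) ∂μ)
        ≤ (ENNReal.ofReal c)⁻¹ *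
          ∫⁻ x, ∫⁻ z, edist (u x) (u z) ^ q / edist x z ^ (r * q + s) ∂μ ∂μ := by
  have hsup := statement19_general (fun x ρ hρ hdiam => (hAhl x ρ hρ hdiam).1) hc
    (mul_pos hr0 hq).le (by positivity) fun x z => edist (u x) (u z) ^ q
  exact ⟨iSup₂_le_iff.1 hsup, hsup⟩
end
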